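/- Let R be a quantum nilpotent algebra of dimension N over a field K, with eigenvalues λ_{kl} defined by h_k · x_l = λ_{kl} x_l for 1 ≤ l < k ≤ N, and let y_1, …, y_N be the canonical sequence of homogeneous prime elements of the chain of subalgebras R_1 ⊂ ⋯ ⊂ R_N = R. Let Ω : ℤ^N × ℤ^N → K^× be the unique group bicharacter with Ω(e_k, e_l) = 1 if k = l, Ω(e_k, e_l) = λ_{kl} if k > l, and Ω(e_k, e_l) = λ_{lk}^{−1} if k < l, and set ē_k := e_k + e_{p(k)} + e_{p²(k)} + ⋯ (with e_{−∞} := 0). Then the assignment Y_k^{±1} ↦ y_k^{±1} (1 ≤ k ≤ N) defines a K-algebra embedding of the quantum torus T_q associated to the N × N multiplicatively skewsymmetric matrix with entries q_{kl} := Ω(ē_k, ē_l) into the division ring of fractions Fract(R) of R. -/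

import Mathlib

open scoped BigOperators

noncomputable section

universe u v

/-- The group of `K`-points of a split torus of rank `r`. -/
abbrev Torus (K : Type u) [Field K] (r : ℕ) : Type u := Fin r → Kˣ

section Core

variable (K : Type u) [Field K] {R : Type v} [Ring R] [Algebra K R] {r N : ℕ}

/-- `a` is an eigenvector of the torus action `act` with (integral) character `f`. -/
def IsEigenWith (act : Torus K r →* (R ≃ₐ[K] R)) (f : Fin r → ℤ) (a : R) : Prop :=
  ∀ ξ : Torus K r, act ξ a = ((∏ i, ξ i ^ f i : Kˣ) : K) • a

/-- The torus action `act` is rational: every element is a finite sum of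
eigenvectors whose eigenvalues are given by integral characters of the torus. -/
def IsRationalAction (act : Torus K r →* (R ≃ₐ[K] R)) : Prop :=
  ∀ a : R, ∃ (s : Finset (Fin r → ℤ)) (c : (Fin r → ℤ) → R),
    a = ∑ f ∈ s, c f ∧ ∀ f ∈ s, IsEigenWith K act f (c f)

/-- The ordered monomial `x 0 ^ m 0 * x 1 ^ m 1 * ⋯ * x (N-1) ^ m (N-1)`. -/
def ordMonomial (x : Fin N → R) (m : Fin N → ℕ) : R :=
  ((List.finRange N).map fun k => x k ^ m k).prod

/-- The ordered monomial in the reversed order of the generators. -/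
def revOrdMonomial (x : Fin N → R) (m : Fin N → ℕ) : R :=
  ((List.finRange N).reverse.map fun k => x k ^ m k).prod

/-- The subalgebra generated by the first `m` of the elements `x 0, …, x (N-1)`. -/
def Rsub (x : Fin N → R) (m : ℕ) : Subalgebra K R :=
  Algebra.adjoin K (x '' {l : Fin N | (l : ℕ) < m})

/-- The subalgebra generated by the elements `x l` with `m < l` (for the reversed order). -/
def RsubRev (x : Fin N → R) (m : ℕ) : Subalgebra K R :=
  Algebra.adjoin K (x '' {l : Fin N | m < (l : ℕ)})

/-- The skew derivation `δ_k : a ↦ x_k a − (h_k · a) x_k` attached to the `k`-th generator. -/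
def skewDelta (act : Torus K r →* (R ≃ₐ[K] R)) (x : Fin N → R) (h : Fin N → Torus K r)
    (k : Fin N) : R → R :=
  fun a => x k * a - act (h k) a * x k

end Core

/-- A quantum nilpotent algebra (CGL extension) of dimension `N`:  an iterated skew
polynomial extension `R = K[x_1][x_2; σ_2, δ_2]⋯[x_N; σ_N, δ_N]` equipped with a rational
action of a torus `H = (Kˣ)^r` by `K`-algebra automorphisms such that the `x_k` are
`H`-eigenvectors, each `δ_k` is a locally nilpotent `σ_k`-derivation of the subalgebra
generated by `x_1, …, x_{k-1}`, and each `σ_k` is given by the action of a torus element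
`h_k` whose eigenvalue `λ_k` on `x_k` is not a root of unity.  The iterated skew polynomial
presentation is encoded by the generation, linear independence of ordered monomials
(PBW basis) and the skew commutation conditions. -/
structure QNA (K : Type u) [Field K] (R : Type v) [Ring R] [Algebra K R] (N r : ℕ) where
  x : Fin N → R
  act : Torus K r →* (R ≃ₐ[K] R)
  h : Fin N → Torus K r
  lam : Fin N → K
  rational : IsRationalAction K act
  gen : Algebra.adjoin K (Set.range x) = ⊤
  pbw : LinearIndependent K (ordMonomial (R := R) x)
  eigenvec : ∀ k : Fin N, ∃ f : Fin r → ℤ, IsEigenWith K act f (x k)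
  stable : ∀ k : Fin N, ∀ a ∈ Rsub K x (k : ℕ), skewDelta K act x h k a ∈ Rsub K x (k : ℕ)
  locnil : ∀ k : Fin N, ∀ a ∈ Rsub K x (k : ℕ), ∃ n : ℕ, (skewDelta K act x h k)^[n] a = 0
  hx : ∀ k, act (h k) (x k) = lam k • x k
  lam_not_root : ∀ k, ∀ n : ℕ, n ≠ 0 → lam k ^ n ≠ 1

/-- A symmetric quantum nilpotent algebra: a quantum nilpotent algebra which admits an
iterated skew polynomial presentation, satisfying the same axioms, also for the reversed
order `x_N, x_{N-1}, …, x_1` of the generators, with respect to torus elements `h*_k`. -/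
structure SymQNA (K : Type u) [Field K] (R : Type v) [Ring R] [Algebra K R] (N r : ℕ)
    extends QNA K R N r where
  hstar : Fin N → Torus K r
  lamstar : Fin N → K
  pbwRev : LinearIndependent K (revOrdMonomial (R := R) x)
  stableRev : ∀ k : Fin N, ∀ a ∈ RsubRev K x (k : ℕ),
    skewDelta K act x hstar k a ∈ RsubRev K x (k : ℕ)
  locnilRev : ∀ k : Fin N, ∀ a ∈ RsubRev K x (k : ℕ),
    ∃ n : ℕ, (skewDelta K act x hstar k)^[n] a = 0
  hxstar : ∀ k, act (hstar k) (x k) = lamstar k • x k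
  lamstar_not_root : ∀ k, ∀ n : ℕ, n ≠ 0 → lamstar k ^ n ≠ 1

section Prime

variable (K : Type u) [Field K] {R : Type v} [Ring R] [Algebra K R] {r N : ℕ}

/-- The skew derivation `δ_k` of the `k`-th step of the presentation vanishes. -/
def deltaZero (Q : QNA K R N r) (k : Fin N) : Prop :=
  ∀ a ∈ Rsub K Q.x (k : ℕ), skewDelta K Q.act Q.x Q.h k a = 0

/-- `p` is a prime element of the subalgebra `A`:  `p` is a nonzero noninvertible normal
element of `A` (`pA = Ap`) such that `A/Ap` is a domain. -/
def IsPrimeIn (A : Subalgebra K R) (p : R) : Prop :=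
  p ∈ A ∧ p ≠ 0 ∧ (¬ ∃ u ∈ A, p * u = 1 ∧ u * p = 1) ∧
  (∀ a ∈ A, ∃ b ∈ A, a * p = p * b) ∧
  (∀ a ∈ A, ∃ b ∈ A, p * a = b * p) ∧
  (∀ a ∈ A, ∀ b ∈ A, (∃ d ∈ A, a * b = p * d) → (∃ d ∈ A, a = p * d) ∨ (∃ d ∈ A, b = p * d))

/-- The predecessor function of the level sets of `η`:  `p(k)` is the largest `l < k`
with `η l = η k`, and `⊥` (i.e. `−∞`) if there is no such `l`. -/
def predIdx {α : Type*} [DecidableEq α] (η : Fin N → α) (k : Fin N) : WithBot (Fin N) :=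
  (Finset.univ.filter fun l => l < k ∧ η l = η k).max

/-- The successor function of the level sets of `η`:  `s(k)` is the smallest `l > k`
with `η l = η k`, and `⊤` (i.e. `+∞`) if there is no such `l`. -/
def succIdx {α : Type*} [DecidableEq α] (η : Fin N → α) (k : Fin N) : WithTop (Fin N) :=
  (Finset.univ.filter fun l => k < l ∧ η l = η k).min

/-- `(η, c, y)` is a sequence of homogeneous prime elements for the quantum nilpotent
algebra `Q` in the sense of the prime element theorem:  `y` is defined by the recursion
`y_k = y_{p(k)} x_k − c_k` (if `δ_k ≠ 0`; `y_k = x_k` if `δ_k = 0`), the `y_k` are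
`H`-eigenvectors, and for every `k` the homogeneous prime elements of the subalgebra
`R_k` generated by `x_1, …, x_k` are precisely the nonzero scalar multiples of the
`y_l` with `l ≤ k` and `s(l) > k`. -/
structure IsPrimeSeq (Q : QNA K R N r) (η : Fin N → ℤ) (c : Fin N → R) (y : Fin N → R) :
    Prop where
  c_mem : ∀ k : Fin N, ¬ deltaZero K Q k → c k ∈ Rsub K Q.x (k : ℕ)
  rec_delta_zero : ∀ k : Fin N, deltaZero K Q k → y k = Q.x k
  rec_delta_ne : ∀ k : Fin N, ¬ deltaZero K Q k →
    y k = (WithBot.recBotCoe (1 : R) (fun l => y l) (predIdx η k)) * Q.x k - c k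
  homog : ∀ k : Fin N, ∃ f : Fin r → ℤ, IsEigenWith K Q.act f (y k)
  prime_iff : ∀ k : Fin N, ∀ u : R,
    (IsPrimeIn K (Rsub K Q.x ((k : ℕ) + 1)) u ∧ ∃ f : Fin r → ℤ, IsEigenWith K Q.act f u) ↔
    (∃ l : Fin N, l ≤ k ∧ (∀ l' : Fin N, l < l' → l' ≤ k → η l' ≠ η l) ∧
      ∃ t : Kˣ, u = (t : K) • y l)

/-- The vector `ē_k = e_k + e_{p(k)} + e_{p²(k)} + ⋯ ∈ ℤ^N`. -/
def ebar (η : Fin N → ℤ) (k : Fin N) : Fin N → ℤ :=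
  fun l => if l ≤ k ∧ η l = η k then 1 else 0

/-- The multiplicatively skewsymmetric matrix of eigenvalues:  `1` on the diagonal,
`λ_{kl}` below it and `λ_{lk}⁻¹` above it. -/
def omegaEntry (lam2 : Fin N → Fin N → Kˣ) (k l : Fin N) : Kˣ :=
  if k = l then 1 else if l < k then lam2 k l else (lam2 l k)⁻¹

/-- The unique group bicharacter `Ω : ℤ^N × ℤ^N → Kˣ` with `Ω(e_k, e_l)` equal to `1`,
`λ_{kl}`, `λ_{lk}⁻¹` according as `k = l`, `k > l`, `k < l`. -/
def Omega (lam2 : Fin N → Fin N → Kˣ) (f g : Fin N → ℤ) : Kˣ :=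
  ∏ k, ∏ l, (omegaEntry K lam2 k l) ^ (f k * g l)

/-- The set of exchangeable indices: those `k` with `s(k) ≠ +∞`. -/
def exSet (η : Fin N → ℤ) : Finset (Fin N) :=
  Finset.univ.filter fun k => ∃ l, k < l ∧ η l = η k

/-- Condition (A): `K` contains square roots of the scalars `λ_{kl}` such that the
subgroup of `Kˣ` generated by all of them contains no elements of order 2. -/
def CondA (lam2 : Fin N → Fin N → Kˣ) : Prop :=
  ∃ sq : Fin N → Fin N → Kˣ, (∀ k l : Fin N, l < k → sq k l ^ 2 = lam2 k l) ∧
    ∀ g ∈ Subgroup.closure {u : Kˣ | ∃ k l : Fin N, l < k ∧ u = sq k l}, g ^ 2 = 1 → g = 1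

/-- Condition (B): there exist positive integers `d_n`, `n ∈ range η`, such that
`(λ*_k)^{d_{η(l)}} = (λ*_l)^{d_{η(k)}}` for all exchangeable `k, l`. -/
def CondB (η : Fin N → ℤ) (lamstar : Fin N → K) : Prop :=
  ∃ d : ℤ → ℕ, (∀ n ∈ Set.range η, 0 < d n) ∧
    ∀ k ∈ exSet η, ∀ l ∈ exSet η, lamstar k ^ d (η l) = lamstar l ^ d (η k)

/-- The defining conditions for the exchange matrix `B̃ ∈ M_{N×ex}(ℤ)`:  columns indexed
outside `ex` vanish; `Ω(Σ_l b_{lk} ē_l, ē_n)` equals `λ*_n` for `k = n` and `1` otherwise;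
and the products `y_1^{b_{1k}} ⋯ y_N^{b_{Nk}}` are fixed under `H`, i.e. the characters
`χ_{y_l}` of the `y_l` satisfy `Σ_l b_{lk} χ_{y_l} = 0`. -/
def IsExchangeMatrix (lam2 : Fin N → Fin N → Kˣ) (η : Fin N → ℤ) (lamstar : Fin N → K)
    (chiy : Fin N → Fin r → ℤ) (B : Fin N → Fin N → ℤ) : Prop :=
  (∀ k : Fin N, k ∉ exSet η → ∀ l, B l k = 0) ∧
  (∀ k ∈ exSet η, ∀ n : Fin N,
    ((Omega K lam2 (fun j => ∑ l, B l k * ebar η l j) (ebar η n) : Kˣ) : K) =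
      (if k = n then lamstar n else 1)) ∧
  (∀ k ∈ exSet η, ∀ i : Fin r, (∑ l, B l k * chiy l i) = 0)

/-- `ι : R →ₐ[K] D` realizes the division ring `D` as the division ring of fractions
`Fract R`:  `ι` is injective and every element of `D` is a right fraction `ι(a) ι(b)⁻¹`. -/
def IsFractionEmb {D : Type v} [DivisionRing D] [Algebra K D] (ι : R →ₐ[K] D) : Prop :=
  Function.Injective ι ∧ ∀ d : D, ∃ a b : R, b ≠ 0 ∧ d * ι b = ι a

end Prime

namespace QTE

section Step

variable {K : Type u} [Field K] {R : Type v} [Ring R] [Algebra K R]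

/-- `Ffil A x n = ∑_{i<n} A x^i`. -/
def Ffil (A : Subalgebra K R) (x : R) : ℕ → Submodule K R
  | 0 => ⊥
  | n + 1 => Ffil A x n ⊔ (Subalgebra.toSubmodule A).map (LinearMap.mulRight K (x ^ n))

variable {A : Subalgebra K R} {x : R}

theorem mem_Ffil_zero {b : R} : b ∈ Ffil A x 0 ↔ b = 0 := by
  simp [Ffil]

theorem mem_Ffil_succ {n : ℕ} {b : R} :
    b ∈ Ffil A x (n + 1) ↔ ∃ f ∈ Ffil A x n, ∃ a ∈ A, b = f + a * x ^ n := by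
  simp only [Ffil, Submodule.mem_sup, Submodule.mem_map, Subalgebra.mem_toSubmodule]
  constructor
  · rintro ⟨f, hf, z, ⟨a, ha, rfl⟩, rfl⟩
    exact ⟨f, hf, a, ha, by simp⟩
  · rintro ⟨f, hf, a, ha, rfl⟩
    exact ⟨f, hf, _, ⟨a, ha, rfl⟩, by simp⟩

theorem Ffil_le_succ (n : ℕ) : Ffil A x n ≤ Ffil A x (n + 1) := le_sup_left

theorem Ffil_mono : Monotone (Ffil A x) := monotone_nat_of_le_succ Ffil_le_succ

theorem mul_pow_mem_Ffil {a : R} (ha : a ∈ A) (n : ℕ) : a * x ^ n ∈ Ffil A x (n + 1) :=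
  mem_Ffil_succ.2 ⟨0, Submodule.zero_mem _, a, ha, by simp⟩

theorem mul_pow_mem_Ffil_of_lt {a : R} (ha : a ∈ A) {n m : ℕ} (h : n < m) :
    a * x ^ n ∈ Ffil A x m := Ffil_mono (Nat.succ_le_of_lt h) (mul_pow_mem_Ffil ha n)

theorem Ffil_mul_left {n : ℕ} {a f : R} (ha : a ∈ A) (hf : f ∈ Ffil A x n) :
    a * f ∈ Ffil A x n := by
  induction n generalizing f with
  | zero => rw [mem_Ffil_zero] at *; simp [hf]
  | succ n ih =>
    obtain ⟨f, hf', c, hc, rfl⟩ := mem_Ffil_succ.1 hf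
    exact mem_Ffil_succ.2 ⟨a * f, ih hf', a * c, A.mul_mem ha hc, by noncomm_ring⟩

theorem Ffil_mul_x {n : ℕ} {f : R} (hf : f ∈ Ffil A x n) : f * x ∈ Ffil A x (n + 1) := by
  induction n generalizing f with
  | zero => rw [mem_Ffil_zero] at hf; simp [hf]
  | succ n ih =>
    obtain ⟨f, hf', c, hc, rfl⟩ := mem_Ffil_succ.1 hf
    exact mem_Ffil_succ.2 ⟨f * x, ih hf', c, hc, by rw [add_mul, mul_assoc, ← pow_succ]⟩

theorem Ffil_mul_pow {n : ℕ} {f : R} (hf : f ∈ Ffil A x n) (j : ℕ) :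
    f * x ^ j ∈ Ffil A x (n + j) := by
  induction j with
  | zero => simpa using hf
  | succ j ih => rw [pow_succ, ← mul_assoc]; exact Ffil_mul_x ih

variable {σ : R → R}

theorem Ffil_x_mul (hσ : ∀ a ∈ A, σ a ∈ A) (hδ : ∀ a ∈ A, x * a - σ a * x ∈ A)
    {n : ℕ} {f : R} (hf : f ∈ Ffil A x n) : x * f ∈ Ffil A x (n + 1) := by
  induction n generalizing f with
  | zero => rw [mem_Ffil_zero] at hf; simp [hf]
  | succ n ih =>
    obtain ⟨f, hf', c, hc, rfl⟩ := mem_Ffil_succ.1 hf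
    refine mem_Ffil_succ.2 ⟨x * f + (x * c - σ c * x) * x ^ n, ?_, σ c, hσ c hc, ?_⟩
    · exact Submodule.add_mem _ (ih hf') (mul_pow_mem_Ffil (hδ c hc) n)
    · rw [pow_succ']; noncomm_ring

theorem Ffil_pow_mul (hσ : ∀ a ∈ A, σ a ∈ A) (hδ : ∀ a ∈ A, x * a - σ a * x ∈ A)
    {n : ℕ} {f : R} (hf : f ∈ Ffil A x n) (j : ℕ) : x ^ j * f ∈ Ffil A x (n + j) := by
  induction j with
  | zero => simpa using hf
  | succ j ih => rw [pow_succ', mul_assoc]; exact Ffil_x_mul hσ hδ ih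

theorem iter_mem (hσ : ∀ a ∈ A, σ a ∈ A) {a : R} (ha : a ∈ A) (n : ℕ) : σ^[n] a ∈ A := by
  induction n with
  | zero => exact ha
  | succ n ih => rw [Function.iterate_succ_apply']; exact hσ _ ih

theorem pow_mul_sub_mem (hσ : ∀ a ∈ A, σ a ∈ A) (hδ : ∀ a ∈ A, x * a - σ a * x ∈ A)
    {a : R} (ha : a ∈ A) (n : ℕ) : x ^ n * a - σ^[n] a * x ^ n ∈ Ffil A x n := by
  induction n with
  | zero => simp
  | succ n ih =>
    have h1 := Ffil_x_mul hσ hδ ih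
    have h2 := mul_pow_mem_Ffil (x := x) (hδ _ (iter_mem hσ ha n)) n
    have := Submodule.add_mem _ h1 h2
    convert this using 1
    rw [Function.iterate_succ_apply', pow_succ', ]
    noncomm_ring

theorem Ffil_le {B : Subalgebra K R} (hAB : A ≤ B) (hx : x ∈ B) (n : ℕ) {f : R}
    (hf : f ∈ Ffil A x n) : f ∈ B := by
  induction n generalizing f with
  | zero => rw [mem_Ffil_zero] at hf; rw [hf]; exact B.zero_mem
  | succ n ih =>
    obtain ⟨f, hf', c, hc, rfl⟩ := mem_Ffil_succ.1 hf
    exact B.add_mem (ih hf') (B.mul_mem (hAB hc) (B.pow_mem hx _))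

theorem exists_mem_Ffil (hσ : ∀ a ∈ A, σ a ∈ A) (hδ : ∀ a ∈ A, x * a - σ a * x ∈ A)
    {s : Set R} (hs : ∀ z ∈ s, z ∈ A ∨ z = x) {b : R} (hb : b ∈ Algebra.adjoin K s) :
    ∃ n, b ∈ Ffil A x n := by
  have key : ∀ n, ∀ f ∈ Ffil A x n, ∃ m, b * f ∈ Ffil A x m := by
    induction hb using Algebra.adjoin_induction with
    | mem z hz =>
      intro n f hf
      rcases hs z hz with h | rfl
      · exact ⟨n, Ffil_mul_left h hf⟩
      · exact ⟨_, Ffil_x_mul hσ hδ hf⟩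
    | algebraMap c => exact fun n f hf => ⟨n, Ffil_mul_left (A.algebraMap_mem c) hf⟩
    | add p q _ _ hp hq =>
      intro n f hf
      obtain ⟨m, hm⟩ := hp n f hf
      obtain ⟨m', hm'⟩ := hq n f hf
      refine ⟨max m m', ?_⟩
      rw [add_mul]
      exact Submodule.add_mem _ (Ffil_mono (le_max_left _ _) hm) (Ffil_mono (le_max_right _ _) hm')
    | mul p q _ _ hp hq =>
      intro n f hf
      obtain ⟨m, hm⟩ := hq n f hf
      obtain ⟨m', hm'⟩ := hp m _ hm
      exact ⟨m', by rwa [mul_assoc]⟩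
  obtain ⟨m, hm⟩ := key 1 1 (by simpa using mul_pow_mem_Ffil (x := x) A.one_mem 0)
  exact ⟨m, by simpa using hm⟩

/-- Left Ore condition for a subalgebra. -/
def LOre (A : Subalgebra K R) : Prop :=
  ∀ a ∈ A, ∀ b ∈ A, b ≠ 0 → ∃ u ∈ A, ∃ v ∈ A, u ≠ 0 ∧ u * a = v * b

theorem LOre_step [IsDomain R] {B : Subalgebra K R} (hAB : A ≤ B) (hxB : x ∈ B)
    (hσ : ∀ a ∈ A, σ a ∈ A) (hδ : ∀ a ∈ A, x * a - σ a * x ∈ A)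
    (hinj : ∀ a ∈ A, a ≠ 0 → σ a ≠ 0) (hB : ∀ b ∈ B, ∃ n, b ∈ Ffil A x n)
    (hA : LOre A) : LOre B := by
  have hiter : ∀ n, ∀ a ∈ A, a ≠ 0 → σ^[n] a ≠ 0 := by
    intro n a ha h0
    induction n with
    | zero => exact h0
    | succ n ih =>
      rw [Function.iterate_succ_apply']; exact hinj _ (iter_mem hσ ha n) ih
  have swap : ∀ a ∈ B, ∀ b ∈ B, a ≠ 0 → (∃ u ∈ B, ∃ v ∈ B, u ≠ 0 ∧ u * b = v * a) → b ≠ 0 →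
      ∃ u ∈ B, ∃ v ∈ B, u ≠ 0 ∧ u * a = v * b := by
    rintro a ha b hb h0 ⟨u, hu, v, hv, hu0, e⟩ hb0
    refine ⟨v, hv, u, hu, ?_, e.symm⟩
    rintro rfl
    rw [zero_mul] at e
    exact (mul_ne_zero hu0 hb0) e
  have main : ∀ s p q : ℕ, p + q = s → q ≤ p → ∀ a ∈ Ffil A x p, ∀ b ∈ Ffil A x q, a ≠ 0 → b ≠ 0 →
      ∃ u ∈ B, ∃ v ∈ B, u ≠ 0 ∧ u * a = v * b := by
    intro s
    induction s using Nat.strong_induction_on with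
    | _ s ih =>
      have ih' : ∀ p q : ℕ, p + q < s → ∀ a ∈ Ffil A x p, ∀ b ∈ Ffil A x q, b ≠ 0 →
          ∃ u ∈ B, ∃ v ∈ B, u ≠ 0 ∧ u * a = v * b := by
        intro p q hpq a ha b hb hb0
        by_cases ha0 : a = 0
        · exact ⟨1, B.one_mem, 0, B.zero_mem, one_ne_zero, by simp [ha0]⟩
        rcases le_total q p with h | h
        · exact ih _ hpq p q rfl h a ha b hb ha0 hb0
        · exact swap a (Ffil_le hAB hxB _ ha) b (Ffil_le hAB hxB _ hb) ha0
            (ih _ hpq q p (add_comm _ _) h b hb a ha hb0 ha0) hb0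
      intro p q hs hqp a ha b hb ha0 hb0
      rcases q with _ | q
      · exact absurd (mem_Ffil_zero.1 hb) hb0
      rcases p with _ | p
      · exact absurd (mem_Ffil_zero.1 ha) ha0
      obtain ⟨b', hb', β, hβ, rfl⟩ := mem_Ffil_succ.1 hb
      by_cases hβ0 : β = 0
      · subst hβ0
        exact ih' (p + 1) q (by omega) a ha _ (by simpa using hb') hb0
      obtain ⟨a', ha', α, hα, rfl⟩ := mem_Ffil_succ.1 ha
      obtain ⟨j, hj⟩ : ∃ j, p = q + j := ⟨p - q, by omega⟩
      obtain ⟨u, hu, v, hv, hu0, e⟩ := hA α hα (σ^[j] β) (iter_mem hσ hβ j) (hiter j β hβ hβ0)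
      set b := b' + β * x ^ q with hbdef
      set a := a' + α * x ^ p with hadef
      have hlow : u * a - v * x ^ j * b ∈ Ffil A x p := by
        have e1 : u * a - v * x ^ j * b =
            u * a' - v * (x ^ j * b') - v * ((x ^ j * β - σ^[j] β * x ^ j) * x ^ q) := by
          have : u * α * x ^ p = v * σ^[j] β * (x ^ j * x ^ q) := by
            rw [e, ← pow_add, hj, add_comm j q]
          rw [hbdef, hadef]
          calc _ = u * a' + u * α * x ^ p - v * x ^ j * b' - v * x ^ j * β * x ^ q := by noncomm_ring
            _ = _ := by rw [this]; noncomm_ring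
        rw [e1]
        refine Submodule.sub_mem _ (Submodule.sub_mem _ (Ffil_mul_left hu ha')
          (Ffil_mul_left hv ?_)) (Ffil_mul_left hv ?_)
        · rw [hj]; exact Ffil_pow_mul hσ hδ hb' j
        · rw [hj, add_comm]; exact Ffil_mul_pow (pow_mul_sub_mem hσ hδ hβ j) q
      obtain ⟨u', hu', v', hv', hu0', e'⟩ := ih' p (q + 1) (by omega) _ hlow b hb hb0
      refine ⟨u' * u, B.mul_mem hu' (hAB hu), v' + u' * (v * x ^ j),
        B.add_mem hv' (B.mul_mem hu' (B.mul_mem (hAB hv) (B.pow_mem hxB _))),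
        mul_ne_zero hu0' hu0, ?_⟩
      rw [add_mul, ← e']
      noncomm_ring
  intro a ha b hb hb0
  by_cases ha0 : a = 0
  · exact ⟨1, B.one_mem, 0, B.zero_mem, one_ne_zero, by simp [ha0]⟩
  obtain ⟨p, hp⟩ := hB a ha
  obtain ⟨q, hq⟩ := hB b hb
  exact main _ (max p q) q rfl (le_max_right _ _) a (Ffil_mono (le_max_left _ _) hp) b hq ha0 hb0

theorem Rsub_mono {N : ℕ} (x : Fin N → R) {m n : ℕ} (h : m ≤ n) : Rsub K x m ≤ Rsub K x n :=
  Algebra.adjoin_mono (Set.image_mono fun _ hl => lt_of_lt_of_le hl h)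

theorem x_mem_Rsub {N : ℕ} (x : Fin N → R) {l : Fin N} {n : ℕ} (h : (l : ℕ) < n) :
    x l ∈ Rsub K x n := Algebra.subset_adjoin ⟨l, h, rfl⟩

theorem Rsub_succ_exists {N : ℕ} (x : Fin N → R) (k : Fin N) {σ : R → R}
    (hσ : ∀ a ∈ Rsub K x (k : ℕ), σ a ∈ Rsub K x (k : ℕ))
    (hδ : ∀ a ∈ Rsub K x (k : ℕ), x k * a - σ a * x k ∈ Rsub K x (k : ℕ))
    {b : R} (hb : b ∈ Rsub K x ((k : ℕ) + 1)) : ∃ n, b ∈ Ffil (Rsub K x (k : ℕ)) (x k) n := by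
  refine exists_mem_Ffil hσ hδ ?_ hb
  rintro z ⟨l, hl, rfl⟩
  simp only [Set.mem_ofPred_eq] at hl
  rcases Nat.lt_succ_iff_lt_or_eq.1 hl with h | h
  · exact Or.inl (x_mem_Rsub x h)
  · exact Or.inr (by rw [Fin.ext h])

theorem LOre_chain [IsDomain R] {N : ℕ} (x : Fin N → R) (σ : Fin N → R → R)
    (hσ : ∀ k : Fin N, ∀ a ∈ Rsub K x (k : ℕ), σ k a ∈ Rsub K x (k : ℕ))
    (hδ : ∀ k : Fin N, ∀ a ∈ Rsub K x (k : ℕ), x k * a - σ k a * x k ∈ Rsub K x (k : ℕ))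
    (hinj : ∀ k : Fin N, ∀ a ∈ Rsub K x (k : ℕ), a ≠ 0 → σ k a ≠ 0)
    (n : ℕ) (hn : n ≤ N) : LOre (Rsub K x n) := by
  induction n with
  | zero =>
    intro a ha b hb hb0
    have : Rsub K x 0 = ⊥ := by simp [Rsub]
    rw [this] at ha hb ⊢
    obtain ⟨a, rfl⟩ := Algebra.mem_bot.1 ha
    obtain ⟨b, rfl⟩ := Algebra.mem_bot.1 hb
    exact ⟨_, hb, _, ha, hb0, by rw [← map_mul, ← map_mul, mul_comm]⟩
  | succ n ih =>
    let k : Fin N := ⟨n, hn⟩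
    exact LOre_step (σ := σ k) (x := x k) (Rsub_mono x (Nat.le_succ n))
      (x_mem_Rsub x (l := k) (Nat.lt_succ_self n)) (hσ k) (hδ k) (hinj k)
      (fun b hb => Rsub_succ_exists x k (hσ k) (hδ k) hb) (ih (by omega))

end Step

end QTE

namespace QTE

section PrimeLift

variable {K : Type u} [Field K] {R : Type v} [Ring R] [Algebra K R]
variable {A B : Subalgebra K R} {x p : R} {σ : R ≃ₐ[K] R}

/-- Lifting a prime element along a skew polynomial extension without derivation. -/
theorem prime_lift [IsDomain R] (hAB : A ≤ B) (hxB : x ∈ B)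
    {s : Set R} (hs : ∀ z ∈ s, z ∈ A ∨ z = x) (hBs : B = Algebra.adjoin K s)
    (hσ : ∀ a ∈ A, σ a ∈ A) (hσ' : ∀ a ∈ A, σ.symm a ∈ A)
    (hx : ∀ a ∈ A, x * a = σ a * x)
    (hfree : ∀ a ∈ A, ∀ n, a * x ^ n ∈ Ffil A x n → a = 0)
    (hunit : ∀ a ∈ A, ∀ b ∈ B, a * b = 1 → b ∈ A)
    (t : Kˣ) (hp : σ p = (t : K) • p) (hprime : IsPrimeIn K A p) : IsPrimeIn K B p := by
  obtain ⟨hpA, hp0, hnu, hn1, hn2, hpr⟩ := hprime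
  have hδ : ∀ a ∈ A, x * a - σ a * x ∈ A := fun a ha => by
    rw [hx a ha, sub_self]; exact A.zero_mem
  have hBF : ∀ b ∈ B, ∃ n, b ∈ Ffil A x n := fun b hb =>
    exists_mem_Ffil (σ := σ) hσ hδ hs (hBs ▸ hb)
  have hxp : x * p = p * ((t : K) • x) := by
    rw [hx p hpA, hp, mul_smul_comm, smul_mul_assoc]
  have hpx : p * x = (((t⁻¹ : Kˣ) : K) • x) * p := by
    rw [smul_mul_assoc, hxp, mul_smul_comm, smul_smul]; simp
  have N1 : ∀ b ∈ B, ∃ d ∈ B, b * p = p * d := by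
    intro b hb
    rw [hBs] at hb
    induction hb using Algebra.adjoin_induction with
    | mem z hz =>
      rcases hs z hz with h | rfl
      · obtain ⟨d, hd, e⟩ := hn1 z h
        exact ⟨d, hAB hd, e⟩
      · exact ⟨_, B.smul_mem hxB _, hxp⟩
    | algebraMap c => exact ⟨_, B.algebraMap_mem c, Algebra.commutes c p⟩
    | add a b _ _ ha hb =>
      obtain ⟨d, hd, e⟩ := ha
      obtain ⟨d', hd', e'⟩ := hb
      exact ⟨_, B.add_mem hd hd', by rw [add_mul, e, e', mul_add]⟩
    | mul a b _ _ ha hb =>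
      obtain ⟨d, hd, e⟩ := ha
      obtain ⟨d', hd', e'⟩ := hb
      exact ⟨_, B.mul_mem hd hd', by rw [mul_assoc, e', ← mul_assoc, e, mul_assoc]⟩
  have N2 : ∀ b ∈ B, ∃ d ∈ B, p * b = d * p := by
    intro b hb
    rw [hBs] at hb
    induction hb using Algebra.adjoin_induction with
    | mem z hz =>
      rcases hs z hz with h | rfl
      · obtain ⟨d, hd, e⟩ := hn2 z h
        exact ⟨d, hAB hd, e⟩
      · exact ⟨_, B.smul_mem hxB _, hpx⟩
    | algebraMap c => exact ⟨_, B.algebraMap_mem c, (Algebra.commutes c p).symm⟩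
    | add a b _ _ ha hb =>
      obtain ⟨d, hd, e⟩ := ha
      obtain ⟨d', hd', e'⟩ := hb
      exact ⟨_, B.add_mem hd hd', by rw [mul_add, e, e', add_mul]⟩
    | mul a b _ _ ha hb =>
      obtain ⟨d, hd, e⟩ := ha
      obtain ⟨d', hd', e'⟩ := hb
      exact ⟨_, B.mul_mem hd hd', by rw [← mul_assoc, e, mul_assoc, e', mul_assoc]⟩
  have coef : ∀ j, ∀ d ∈ Ffil A x j, ∀ n, ∀ c ∈ A, c * x ^ n - p * d ∈ Ffil A x n →
      ∃ e ∈ A, c = p * e := by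
    intro j
    induction j with
    | zero =>
      intro d hd n c hc h
      rw [mem_Ffil_zero] at hd
      refine ⟨0, A.zero_mem, ?_⟩
      rw [mul_zero]
      exact hfree c hc n (by simpa [hd] using h)
    | succ j ih =>
      intro d hd n c hc h
      obtain ⟨d', hd', g, hg, rfl⟩ := mem_Ffil_succ.1 hd
      rcases lt_trichotomy j n with hjn | rfl | hjn
      · refine ih d' hd' n c hc ?_
        have h2 : p * (g * x ^ j) ∈ Ffil A x n :=
          Ffil_mul_left hpA (mul_pow_mem_Ffil_of_lt hg hjn)
        have := Submodule.add_mem _ h h2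
        convert this using 1
        noncomm_ring
      · refine ⟨g, hg, sub_eq_zero.1 (hfree _ (A.sub_mem hc (A.mul_mem hpA hg)) j ?_)⟩
        have h2 : p * d' ∈ Ffil A x j := Ffil_mul_left hpA hd'
        have := Submodule.add_mem _ h h2
        convert this using 1
        noncomm_ring
      · have hg0 : p * g = 0 := by
          refine hfree _ (A.mul_mem hpA hg) j ?_
          have h1 := Ffil_mono hjn.le h
          have h2 : p * d' ∈ Ffil A x j := Ffil_mul_left hpA hd'
          have h3 : c * x ^ n ∈ Ffil A x j := mul_pow_mem_Ffil_of_lt hc hjn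
          have := Submodule.sub_mem _ h3 (Submodule.add_mem _ h1 h2)
          convert this using 1
          noncomm_ring
        have hg1 : g = 0 := (mul_eq_zero.1 hg0).resolve_left hp0
        subst hg1
        exact ih d' hd' n c hc (by simpa using h)
  have hσpow : ∀ n a, σ^[n] a ∈ A → a ∈ A := by
    intro n
    induction n with
    | zero => exact fun a h => h
    | succ n ih =>
      intro a h
      rw [Function.iterate_succ_apply'] at h
      have := hσ' _ h
      rw [AlgEquiv.symm_apply_apply] at this
      exact ih a this
  have hσp : ∀ n a, (∃ e ∈ A, σ^[n] a = p * e) → ∃ e ∈ A, a = p * e := by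
    intro n
    induction n with
    | zero => exact fun a h => h
    | succ n ih =>
      rintro a ⟨e, he, h⟩
      rw [Function.iterate_succ_apply'] at h
      apply ih
      have h1 := congrArg σ.symm h
      have h2 : p = (t : K) • σ.symm p := by
        have := congrArg σ.symm hp
        rwa [AlgEquiv.symm_apply_apply, map_smul] at this
      have h3 : σ.symm p = ((t⁻¹ : Kˣ) : K) • p := by
        conv_rhs => rw [h2]
        rw [smul_smul]; simp
      rw [AlgEquiv.symm_apply_apply, map_mul, h3] at h1
      exact ⟨_, A.smul_mem (hσ' _ he) ((t⁻¹ : Kˣ) : K), by rw [h1, smul_mul_assoc, mul_smul_comm]⟩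
  have main : ∀ q m n, m + n = q → ∀ a ∈ Ffil A x m, ∀ b ∈ Ffil A x n,
      (∃ d ∈ B, a * b = p * d) → (∃ d ∈ B, a = p * d) ∨ (∃ d ∈ B, b = p * d) := by
    intro q
    induction q with
    | zero =>
      intro m n h a ha b hb _
      have : m = 0 := by omega
      subst this
      rw [mem_Ffil_zero] at ha
      exact Or.inl ⟨0, B.zero_mem, by simp [ha]⟩
    | succ q ih =>
      intro m n h a ha b hb hab
      rcases m with _ | m
      · rw [mem_Ffil_zero] at ha
        exact Or.inl ⟨0, B.zero_mem, by simp [ha]⟩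
      rcases n with _ | n
      · rw [mem_Ffil_zero] at hb
        exact Or.inr ⟨0, B.zero_mem, by simp [hb]⟩
      obtain ⟨a', ha', α, hα, rfl⟩ := mem_Ffil_succ.1 ha
      obtain ⟨b', hb', β, hβ, rfl⟩ := mem_Ffil_succ.1 hb
      obtain ⟨d, hd, e⟩ := hab
      have hxa : ∀ i, ∀ c ∈ A, x ^ i * c = σ^[i] c * x ^ i := by
        intro i
        induction i with
        | zero => intro c _; simp
        | succ i ih =>
          intro c hc
          rw [pow_succ', mul_assoc, ih c hc, ← mul_assoc, hx _ (iter_mem hσ hc i),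
            Function.iterate_succ_apply', mul_assoc, ← pow_succ']
      have hFF : ∀ i, ∀ f ∈ Ffil A x i, ∀ j, ∀ g ∈ Ffil A x j, f * g ∈ Ffil A x (i + j - 1) := by
        intro i
        induction i with
        | zero => intro f hf j g hg; rw [mem_Ffil_zero] at hf; simp [hf]
        | succ i ih =>
          intro f hf j g hg
          obtain ⟨f', hf', γ, hγ, rfl⟩ := mem_Ffil_succ.1 hf
          rw [add_mul]
          refine Submodule.add_mem _ (Ffil_mono (by omega) (ih f' hf' j g hg)) ?_
          rw [mul_assoc]
          exact Ffil_mono (by omega) (Ffil_mul_left hγ (Ffil_pow_mul (σ := σ) hσ hδ hg i))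
      have hprod : α * σ^[m] β * x ^ (m + n) - p * d ∈ Ffil A x (m + n) := by
        have : α * σ^[m] β * x ^ (m + n) - p * d =
            - (a' * (b' + β * x ^ n) + (α * x ^ m) * b') := by
          rw [← e, pow_add]
          have : α * x ^ m * (β * x ^ n) = α * σ^[m] β * (x ^ m * x ^ n) := by
            rw [mul_assoc, ← mul_assoc (x ^ m), hxa m β hβ]; noncomm_ring
          rw [← this]; noncomm_ring
        rw [this]
        refine Submodule.neg_mem _ (Submodule.add_mem _ ?_ ?_)
        · exact Ffil_mono (by omega) (hFF _ _ ha' _ _ hb)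
        · rw [mul_assoc, add_comm m n]
          exact Ffil_mul_left hα (Ffil_pow_mul (σ := σ) hσ hδ hb' m)
      obtain ⟨j, hj⟩ := hBF d hd
      have hc := coef j d hj (m + n) _ (A.mul_mem hα (iter_mem hσ hβ m)) hprod
      have hxnB : ∀ i, x ^ i ∈ B := fun i => B.pow_mem hxB i
      rcases hpr _ hα _ (iter_mem hσ hβ m) hc with ⟨e1, he1, h1⟩ | h1
      · have hab' : ∃ d ∈ B, a' * (b' + β * x ^ n) = p * d := by
          refine ⟨d - e1 * x ^ m * (b' + β * x ^ n), B.sub_mem hd (B.mul_mem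
            (B.mul_mem (hAB he1) (hxnB m)) (Ffil_le hAB hxB _ hb)), ?_⟩
          rw [mul_sub, ← e, h1]; noncomm_ring
        rcases ih m (n + 1) (by omega) a' ha' _ hb hab' with ⟨d', hd', h'⟩ | h'
        · left
          exact ⟨d' + e1 * x ^ m, B.add_mem hd' (B.mul_mem (hAB he1) (hxnB m)), by
            rw [h', h1]; noncomm_ring⟩
        · exact Or.inr h'
      · obtain ⟨e1, he1, h1⟩ := hσp m β h1
        obtain ⟨w, hw, hw'⟩ := N1 (a' + α * x ^ m) (Ffil_le hAB hxB _ ha)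
        have hab' : ∃ d ∈ B, (a' + α * x ^ m) * b' = p * d := by
          refine ⟨d - w * (e1 * x ^ n), B.sub_mem hd (B.mul_mem hw
            (B.mul_mem (hAB he1) (hxnB n))), ?_⟩
          rw [mul_sub, ← e, h1, ← mul_assoc p w, ← hw']; noncomm_ring
        rcases ih (m + 1) n (by omega) _ ha b' hb' hab' with h' | ⟨d', hd', h'⟩
        · exact Or.inl h'
        · right
          exact ⟨d' + e1 * x ^ n, B.add_mem hd' (B.mul_mem (hAB he1) (hxnB n)), by
            rw [h', h1]; noncomm_ring⟩
  refine ⟨hAB hpA, hp0, ?_, N1, N2, ?_⟩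
  · rintro ⟨u, hu, h1, h2⟩
    exact hnu ⟨u, hunit p hpA u hu h1, h1, h2⟩
  · intro a ha b hb hab
    obtain ⟨m, hm⟩ := hBF a ha
    obtain ⟨n, hn⟩ := hBF b hb
    exact main _ m n rfl a hm b hn hab

/-- Transport of a prime element by conjugation by `y`. -/
theorem prime_conj [IsDomain R] {y p' : R} (hy : y ≠ 0)
    (hf : ∀ a ∈ A, ∃ b ∈ A, y * a = b * y) (hb : ∀ b ∈ A, ∃ a ∈ A, y * a = b * y)
    (hp'A : p' ∈ A) (hpp' : y * p = p' * y) (hprime : IsPrimeIn K A p) : IsPrimeIn K A p' := by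
  obtain ⟨hpA, hp0, hnu, hn1, hn2, hpr⟩ := hprime
  have can : ∀ {a b : R}, a * y = b * y → a = b := fun h => mul_right_cancel₀ hy h
  have can' : ∀ {a b : R}, y * a = y * b → a = b := fun h => mul_left_cancel₀ hy h
  have mm : ∀ {a b a' b' : R}, y * a = a' * y → y * b = b' * y → y * (a * b) = (a' * b') * y := by
    intro a b a' b' h1 h2
    rw [← mul_assoc, h1, mul_assoc, h2, mul_assoc]
  have down : ∀ {a a' : R}, y * a = a' * y → (∃ d ∈ A, a = p * d) → ∃ d ∈ A, a' = p' * d := by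
    rintro a a' h ⟨d, hd, rfl⟩
    obtain ⟨d', hd', e⟩ := hf d hd
    exact ⟨d', hd', can (by rw [← h, mm hpp' e])⟩
  refine ⟨hp'A, ?_, ?_, ?_, ?_, ?_⟩
  · rintro rfl
    rw [zero_mul] at hpp'
    exact mul_ne_zero hy hp0 hpp'
  · rintro ⟨u', hu', h1, h2⟩
    obtain ⟨u, hu, e⟩ := hb u' hu'
    exact hnu ⟨u, hu, can' (by rw [mm hpp' e, h1, one_mul, mul_one]),
      can' (by rw [mm e hpp', h2, one_mul, mul_one])⟩
  · intro a' ha'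
    obtain ⟨a, ha, e⟩ := hb a' ha'
    obtain ⟨b, hbA, e1⟩ := hn1 a ha
    obtain ⟨b', hb', e2⟩ := hf b hbA
    exact ⟨b', hb', can (by rw [← mm e hpp', e1, mm hpp' e2])⟩
  · intro a' ha'
    obtain ⟨a, ha, e⟩ := hb a' ha'
    obtain ⟨b, hbA, e1⟩ := hn2 a ha
    obtain ⟨b', hb', e2⟩ := hf b hbA
    exact ⟨b', hb', can (by rw [← mm hpp' e, e1, mm e2 hpp'])⟩
  · rintro a' ha' b' hb' ⟨d', hd', h⟩
    obtain ⟨a, ha, ea⟩ := hb a' ha'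
    obtain ⟨b, hbA, eb⟩ := hb b' hb'
    obtain ⟨d, hd, ed⟩ := hb d' hd'
    rcases hpr a ha b hbA ⟨d, hd, can' (by rw [mm ea eb, mm hpp' ed, h])⟩ with h | h
    · exact Or.inl (down ea h)
    · exact Or.inr (down eb h)

end PrimeLift

end QTE

namespace QTE

section Fil

/-- indices smaller than `n` -/
def below (N n : ℕ) : Finset (Fin N) := Finset.univ.filter fun l => (l : ℕ) < n

theorem prod_below_succ {N : ℕ} {G : Type*} [CommMonoid G] (F : Fin N → G) {n : ℕ} (h : n < N) :
    ∏ l ∈ below N (n + 1), F l = (∏ l ∈ below N n, F l) * F ⟨n, h⟩ := by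
  have : below N (n + 1) = insert ⟨n, h⟩ (below N n) := by
    ext l
    simp only [below, Finset.mem_filter, Finset.mem_univ, true_and, Finset.mem_insert, Fin.ext_iff]
    omega
  rw [this, Finset.prod_insert (by simp [below]), mul_comm]

end Fil

section Mono

variable {K : Type u} [Field K] {R : Type v} [Ring R] [Algebra K R] {r N : ℕ}

/-- Partial ordered monomial. -/
def pm (x : Fin N → R) (f : Fin N → ℕ) : ℕ → R
  | 0 => 1
  | k + 1 => pm x f k * (if h : k < N then x ⟨k, h⟩ ^ f ⟨k, h⟩ else 1)

theorem pm_succ (x : Fin N → R) (f : Fin N → ℕ) {k : ℕ} (h : k < N) :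
    pm x f (k + 1) = pm x f k * x ⟨k, h⟩ ^ f ⟨k, h⟩ := by
  simp [pm, h]

theorem pm_eq_take (x : Fin N → R) (f : Fin N → ℕ) (k : ℕ) (hk : k ≤ N) :
    pm x f k = (((List.finRange N).take k).map fun k => x k ^ f k).prod := by
  induction k with
  | zero => simp [pm]
  | succ k ih =>
    rw [pm_succ x f hk, ih (by omega), List.take_add_one]
    have : (List.finRange N)[k]? = some ⟨k, hk⟩ := by
      rw [List.getElem?_eq_getElem (by simpa using hk)]; simp
    rw [this]
    simp

theorem ordMonomial_eq_pm (x : Fin N → R) (f : Fin N → ℕ) : ordMonomial x f = pm x f N := by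
  rw [pm_eq_take x f N le_rfl, ordMonomial, List.take_of_length_le (by simp)]

theorem pm_congr (x : Fin N → R) {f g : Fin N → ℕ} (k : ℕ)
    (h : ∀ l : Fin N, (l : ℕ) < k → f l = g l) : pm x f k = pm x g k := by
  induction k with
  | zero => rfl
  | succ k ih =>
    simp only [pm]
    rw [ih fun l hl => h l (by omega)]
    congr 1
    split_ifs with hk
    · rw [h ⟨k, hk⟩ (by simp)]
    · rfl

theorem pm_stable (x : Fin N → R) {f : Fin N → ℕ} (k : ℕ)
    (h : ∀ l : Fin N, k ≤ (l : ℕ) → f l = 0) (n : ℕ) (hn : k ≤ n) : pm x f n = pm x f k := by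
  induction n, hn using Nat.le_induction with
  | base => rfl
  | succ n hn ih =>
    simp only [pm]
    rw [ih]
    split_ifs with hk
    · rw [h ⟨n, hk⟩ hn]; simp
    · simp

theorem pm_mem (x : Fin N → R) (f : Fin N → ℕ) (k : ℕ) : pm x f k ∈ Rsub K x k := by
  induction k with
  | zero => exact (Rsub K x 0).one_mem
  | succ k ih =>
    simp only [pm]
    refine Subalgebra.mul_mem _ (Rsub_mono x (Nat.le_succ k) ih) ?_
    split_ifs with hk
    · exact Subalgebra.pow_mem _ (x_mem_Rsub x (by simp)) _
    · exact Subalgebra.one_mem _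

/-- Lower terms of the partial monomials. -/
def W (K : Type u) [Field K] [Algebra K R] (x : Fin N → R) (k : ℕ) (h : Fin N → ℕ) :
    Submodule K R :=
  Submodule.span K ((fun n => pm x n k) '' {n | ∃ j : Fin N, (j : ℕ) < k ∧ n j < h j ∧
    ∀ i : Fin N, j < i → (i : ℕ) < k → n i = h i})

theorem W_step1 (x : Fin N → R) {k : ℕ} (hk : k < N) (h : Fin N → ℕ) {a : R}
    (ha : a ∈ W K x k h) : a * x ⟨k, hk⟩ ^ h ⟨k, hk⟩ ∈ W K x (k + 1) h := by
  refine Submodule.span_induction (p := fun a _ => a * x ⟨k, hk⟩ ^ h ⟨k, hk⟩ ∈ W K x (k + 1) h)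
    ?_ ?_ ?_ ?_ ha
  · rintro _ ⟨n, ⟨j, hj, hlt, heq⟩, rfl⟩
    apply Submodule.subset_span
    refine ⟨Function.update n ⟨k, hk⟩ (h ⟨k, hk⟩), ⟨j, by omega, ?_, ?_⟩, ?_⟩
    · rw [Function.update_of_ne]
      · exact hlt
      · rintro rfl; simp at hj
    · intro i hi hik
      rcases eq_or_ne i ⟨k, hk⟩ with rfl | hne
      · simp
      · rw [Function.update_of_ne hne]
        have : (i : ℕ) ≠ k := fun e => hne (Fin.ext e)
        exact heq i hi (by omega)
    · simp only
      rw [pm_succ x _ hk, Function.update_self]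
      congr 1
      refine pm_congr x k fun l hl => Function.update_of_ne ?_ _ _
      rintro rfl; simp at hl
  · simp
  · intro a b _ _ ha hb
    rw [add_mul]; exact Submodule.add_mem _ ha hb
  · intro c a _ ha
    rw [smul_mul_assoc]; exact Submodule.smul_mem _ _ ha

theorem span_pm_mul (x : Fin N → R) {k : ℕ} (hk : k < N) (t : ℕ) {a : R}
    (ha : a ∈ Submodule.span K (Set.range fun f => pm x f k)) :
    a * x ⟨k, hk⟩ ^ t ∈ Submodule.span K ((fun f => pm x f (k + 1)) '' {n | n ⟨k, hk⟩ = t}) := by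
  refine Submodule.span_induction (p := fun a _ => a * x ⟨k, hk⟩ ^ t ∈ Submodule.span K
    ((fun f => pm x f (k + 1)) '' {n | n ⟨k, hk⟩ = t})) ?_ ?_ ?_ ?_ ha
  · rintro _ ⟨n, rfl⟩
    apply Submodule.subset_span
    refine ⟨Function.update n ⟨k, hk⟩ t, by simp, ?_⟩
    simp only
    rw [pm_succ x _ hk, Function.update_self]
    congr 1
    refine pm_congr x k fun l hl => Function.update_of_ne ?_ _ _
    rintro rfl; simp at hl
  · simp
  · intro a b _ _ ha hb
    rw [add_mul]; exact Submodule.add_mem _ ha hb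
  · intro c a _ ha
    rw [smul_mul_assoc]; exact Submodule.smul_mem _ _ ha

theorem act_eigen (Q : QNA K R N r) (ξ : Torus K r) (l : Fin N) :
    ∃ t : Kˣ, Q.act ξ (Q.x l) = (t : K) • Q.x l := by
  obtain ⟨f, hf⟩ := Q.eigenvec l
  exact ⟨_, hf ξ⟩

theorem act_mem (Q : QNA K R N r) (ξ : Torus K r) (k : ℕ) {a : R} (ha : a ∈ Rsub K Q.x k) :
    Q.act ξ a ∈ Rsub K Q.x k := by
  have : Rsub K Q.x k ≤ (Rsub K Q.x k).comap (Q.act ξ).toAlgHom := by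
    refine Algebra.adjoin_le ?_
    rintro _ ⟨l, hl, rfl⟩
    obtain ⟨t, ht⟩ := act_eigen Q ξ l
    change Q.act ξ (Q.x l) ∈ Rsub K Q.x k
    rw [ht]
    exact Subalgebra.smul_mem _ (x_mem_Rsub _ hl) _
  exact this ha

theorem act_symm_mem (Q : QNA K R N r) (ξ : Torus K r) (k : ℕ) {a : R} (ha : a ∈ Rsub K Q.x k) :
    (Q.act ξ).symm a ∈ Rsub K Q.x k := by
  have : (Q.act ξ).symm = Q.act ξ⁻¹ := by
    rw [map_inv]; rfl
  rw [this]
  exact act_mem Q _ k ha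

theorem delta_mem (Q : QNA K R N r) (k : Fin N) :
    ∀ a ∈ Rsub K Q.x (k : ℕ), Q.x k * a - Q.act (Q.h k) a * Q.x k ∈ Rsub K Q.x (k : ℕ) :=
  Q.stable k

theorem Rsub_le_span (Q : QNA K R N r) (k : ℕ) (hk : k ≤ N) {a : R} (ha : a ∈ Rsub K Q.x k) :
    a ∈ Submodule.span K (Set.range fun f => pm Q.x f k) := by
  induction k generalizing a with
  | zero =>
    have : Rsub K Q.x 0 = ⊥ := by simp [Rsub]
    rw [this] at ha
    obtain ⟨c, rfl⟩ := Algebra.mem_bot.1 ha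
    rw [Algebra.algebraMap_eq_smul_one]
    exact Submodule.smul_mem _ _ (Submodule.subset_span ⟨0, rfl⟩)
  | succ k ih =>
    obtain ⟨n, hn⟩ := Rsub_succ_exists Q.x ⟨k, hk⟩ (σ := Q.act (Q.h ⟨k, hk⟩))
      (fun a ha => act_mem Q _ _ ha) (delta_mem Q ⟨k, hk⟩) ha
    clear ha
    induction n generalizing a with
    | zero => rw [mem_Ffil_zero] at hn; rw [hn]; exact Submodule.zero_mem _
    | succ n ihn =>
      obtain ⟨f, hf, c, hc, rfl⟩ := mem_Ffil_succ.1 hn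
      refine Submodule.add_mem _ (ihn hf) ?_
      refine Submodule.span_mono ?_ (span_pm_mul Q.x hk n (ih (by omega) hc))
      exact Set.image_subset_range _ _

theorem W_step2 (Q : QNA K R N r) {k : ℕ} (hk : k < N) (h : Fin N → ℕ) (t : ℕ)
    (ht : t ≤ h ⟨k, hk⟩) {a : R}
    (ha : a ∈ Ffil (Rsub K Q.x k) (Q.x ⟨k, hk⟩) t) : a ∈ W K Q.x (k + 1) h := by
  induction t generalizing a with
  | zero => rw [mem_Ffil_zero] at ha; rw [ha]; exact Submodule.zero_mem _
  | succ n ihn =>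
    obtain ⟨f, hf, c, hc, rfl⟩ := mem_Ffil_succ.1 ha
    refine Submodule.add_mem _ (ihn (by omega) hf) ?_
    refine Submodule.span_mono (Set.image_mono ?_)
      (span_pm_mul Q.x hk n (Rsub_le_span Q k (by omega) hc))
    intro m hm
    have hm' : m ⟨k, hk⟩ = n := hm
    refine ⟨⟨k, hk⟩, by simp, by omega, fun i hi hik => ?_⟩
    have : k < (i : ℕ) := hi
    omega

/-- The commutation scalars. -/
def Mk (lam2 : Fin N → Fin N → Kˣ) (f g : Fin N → ℕ) (n : ℕ) : Kˣ :=
  ∏ k ∈ below N n, ∏ l ∈ below N k, lam2 k l ^ (f k * g l)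

theorem act_pm (Q : QNA K R N r) (lam2 : Fin N → Fin N → Kˣ)
    (hlam2 : ∀ k l : Fin N, l < k → Q.act (Q.h k) (Q.x l) = ((lam2 k l : Kˣ) : K) • Q.x l)
    (g : Fin N → ℕ) (k : Fin N) (n : ℕ) (hn : n ≤ k) :
    Q.act (Q.h k) (pm Q.x g n) = ((∏ l ∈ below N n, lam2 k l ^ g l : Kˣ) : K) • pm Q.x g n := by
  induction n with
  | zero => simp [pm, below]
  | succ n ih =>
    have hN : n < N := by have := k.2; omega
    rw [pm_succ _ _ hN, map_mul, map_pow, ih (by omega), hlam2 k ⟨n, hN⟩ (by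
      rw [Fin.lt_def]; exact hn), prod_below_succ _ hN, smul_pow, smul_mul_smul_comm]
    simp

theorem act_pm_iter (Q : QNA K R N r) (lam2 : Fin N → Fin N → Kˣ)
    (hlam2 : ∀ k l : Fin N, l < k → Q.act (Q.h k) (Q.x l) = ((lam2 k l : Kˣ) : K) • Q.x l)
    (g : Fin N → ℕ) (k : Fin N) (i : ℕ) :
    (Q.act (Q.h k))^[i] (pm Q.x g k) =
      ((∏ l ∈ below N k, lam2 k l ^ (i * g l) : Kˣ) : K) • pm Q.x g k := by
  induction i with
  | zero => simp
  | succ i ih =>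
    rw [Function.iterate_succ_apply', ih, map_smul, act_pm Q lam2 hlam2 g k k le_rfl, smul_smul]
    congr 1
    rw [← Units.val_mul, ← Finset.prod_mul_distrib]
    congr 1
    refine Finset.prod_congr rfl fun l _ => ?_
    rw [← pow_add, add_mul, one_mul]

theorem pm_mul (Q : QNA K R N r) (lam2 : Fin N → Fin N → Kˣ)
    (hlam2 : ∀ k l : Fin N, l < k → Q.act (Q.h k) (Q.x l) = ((lam2 k l : Kˣ) : K) • Q.x l)
    (f g : Fin N → ℕ) (k : ℕ) (hk : k ≤ N) :
    pm Q.x f k * pm Q.x g k - ((Mk lam2 f g k : Kˣ) : K) • pm Q.x (f + g) k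
      ∈ W K Q.x k (f + g) := by
  induction k with
  | zero => simp [pm, Mk, below]
  | succ k ih =>
    have ih := ih (by omega)
    set X := Q.x ⟨k, hk⟩ with hX
    set i := f ⟨k, hk⟩ with hi
    set j := g ⟨k, hk⟩ with hj
    set P := pm Q.x f k with hP
    set G := pm Q.x g k with hG
    set w : Kˣ := ∏ l ∈ below N k, lam2 ⟨k, hk⟩ l ^ (i * g l) with hw
    have hM : Mk lam2 f g (k + 1) = w * Mk lam2 f g k := by
      rw [Mk, prod_below_succ _ hk, mul_comm]; rfl
    have hφ := pow_mul_sub_mem (σ := Q.act (Q.h ⟨k, hk⟩)) (A := Rsub K Q.x k) (x := X)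
      (fun a ha => act_mem Q _ _ ha) (delta_mem Q ⟨k, hk⟩) (pm_mem Q.x g k) i
    have hit : (Q.act (Q.h ⟨k, hk⟩))^[i] (pm Q.x g k) = (w : K) • G :=
      act_pm_iter Q lam2 hlam2 g ⟨k, hk⟩ i
    rw [hit] at hφ
    have hfg : (f + g) ⟨k, hk⟩ = i + j := rfl
    rw [pm_succ _ _ hk, pm_succ _ _ hk, pm_succ _ _ hk, hfg, ← hX, ← hi, ← hj, ← hP, ← hG, hM]
    have e : P * X ^ i * (G * X ^ j) -
        ((w * Mk lam2 f g k : Kˣ) : K) • (pm Q.x (f + g) k * X ^ (i + j)) =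
        P * ((X ^ i * G - (w : K) • G * X ^ i) * X ^ j) +
        (w : K) • ((P * G - ((Mk lam2 f g k : Kˣ) : K) • pm Q.x (f + g) k) * X ^ (i + j)) := by
      rw [Units.val_mul, mul_smul, pow_add]
      simp only [sub_mul, mul_sub, smul_sub, smul_mul_assoc, mul_smul_comm, mul_assoc]
      abel
    rw [e]
    refine Submodule.add_mem _ ?_ (Submodule.smul_mem _ _ ?_)
    · exact W_step2 Q hk (f + g) (i + j) (by rw [hfg])
        (Ffil_mul_left (pm_mem Q.x f k) (Ffil_mul_pow hφ j))
    · exact W_step1 Q.x hk (f + g) ih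

end Mono

end QTE

namespace QTE

section Lead

variable {K : Type u} [Field K] {R : Type v} [Ring R] [Algebra K R] {r N : ℕ}

theorem colex_lt_iff (n m : Fin N → ℕ) :
    toColex n < toColex m ↔ ∃ j : Fin N, n j < m j ∧ ∀ i : Fin N, j < i → n i = m i := by
  constructor
  · rintro ⟨j, h1, h2⟩
    exact ⟨j, h2, fun i hi => h1 i hi⟩
  · rintro ⟨j, h2, h1⟩
    exact ⟨j, fun i hi => h1 i hi, h2⟩

theorem colex_add_lt {n m n' m' : Fin N → ℕ} (h : toColex n < toColex m)
    (h' : toColex n' ≤ toColex m') : toColex (n + n') < toColex (m + m') := by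
  rcases h'.lt_or_eq with h' | h'
  · replace h' := (colex_lt_iff n' m').1 h'
    rw [colex_lt_iff] at h ⊢
    obtain ⟨j, hj, hj'⟩ := h
    obtain ⟨i, hi, hi'⟩ := h'
    refine ⟨max i j, ?_, fun l hl => ?_⟩
    · rcases lt_trichotomy i j with hij | rfl | hij
      · rw [max_eq_right hij.le, Pi.add_apply, Pi.add_apply, hi' j hij]; omega
      · rw [max_self, Pi.add_apply, Pi.add_apply]; omega
      · rw [max_eq_left hij.le, Pi.add_apply, Pi.add_apply, hj' i hij]; omega
    · rw [Pi.add_apply, Pi.add_apply, hj' l ((le_max_right _ _).trans_lt hl),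
        hi' l ((le_max_left _ _).trans_lt hl)]
  · have : n' = m' := toColex.injective h'
    subst this
    rw [colex_lt_iff] at *
    obtain ⟨j, hj, hj'⟩ := h
    exact ⟨j, by simpa using hj, fun i hi => by simp [hj' i hi]⟩

theorem colex_add_lt' {n m n' m' : Fin N → ℕ} (h : toColex n ≤ toColex m)
    (h' : toColex n' < toColex m') : toColex (n + n') < toColex (m + m') := by
  rw [add_comm n, add_comm m]; exact colex_add_lt h' h

/-- The span of monomials lower than `m`. -/
def V (K : Type u) [Field K] [Algebra K R] (x : Fin N → R) (m : Fin N → ℕ) : Submodule K R :=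
  Submodule.span K (ordMonomial x '' {n | toColex n < toColex m})

theorem W_eq_V (x : Fin N → R) (m : Fin N → ℕ) : W K x N m = V K x m := by
  unfold W V
  congr 1
  have : (fun n => pm x n N) = ordMonomial x := by
    ext n; rw [ordMonomial_eq_pm]
  rw [this]
  congr 1
  ext n
  change (∃ j : Fin N, (j : ℕ) < N ∧ _) ↔ toColex n < toColex m
  rw [colex_lt_iff]
  constructor
  · rintro ⟨j, -, h1, h2⟩
    exact ⟨j, h1, fun i hi => h2 i hi i.2⟩
  · rintro ⟨j, h1, h2⟩
    exact ⟨j, j.2, h1, fun i hi _ => h2 i hi⟩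

theorem V_mono (x : Fin N → R) {m n : Fin N → ℕ} (h : toColex m ≤ toColex n) :
    V K x m ≤ V K x n :=
  Submodule.span_mono (Set.image_mono fun _ hl => lt_of_lt_of_le hl h)

theorem mono_mem_V (x : Fin N → R) {m n : Fin N → ℕ} (h : toColex m < toColex n) :
    ordMonomial x m ∈ V K x n := Submodule.subset_span ⟨m, h, rfl⟩

theorem top_le_span (Q : QNA K R N r) :
    ⊤ ≤ Submodule.span K (Set.range (ordMonomial (R := R) Q.x)) := by
  intro a _
  have h1 : a ∈ Rsub K Q.x N := by
    have : Rsub K Q.x N = ⊤ := by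
      rw [← Q.gen, Rsub]
      congr 1
      ext z; constructor
      · rintro ⟨l, _, rfl⟩; exact ⟨l, rfl⟩
      · rintro ⟨l, rfl⟩; exact ⟨l, l.2, rfl⟩
    rw [this]; trivial
  have := Rsub_le_span Q N le_rfl h1
  convert this using 3
  ext f; rw [ordMonomial_eq_pm]

/-- The PBW basis. -/
def pbwBasis (Q : QNA K R N r) : Module.Basis (Fin N → ℕ) K R :=
  Module.Basis.mk Q.pbw (top_le_span Q)

theorem pbwBasis_coe (Q : QNA K R N r) : ⇑(pbwBasis Q) = ordMonomial Q.x :=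
  Module.Basis.coe_mk _ _

theorem mem_V_iff (Q : QNA K R N r) (m : Fin N → ℕ) (a : R) :
    a ∈ V K Q.x m ↔ ∀ n, (pbwBasis Q).repr a n ≠ 0 → toColex n < toColex m := by
  rw [V, ← pbwBasis_coe, Module.Basis.mem_span_image]
  constructor
  · intro h n hn
    exact h (Finset.mem_coe.2 (Finsupp.mem_support_iff.2 hn))
  · intro h n hn
    exact h n (Finsupp.mem_support_iff.1 (Finset.mem_coe.1 hn))

/-- `a` has leading term `c x^m`. -/
def LT (Q : QNA K R N r) (a : R) (m : Fin N → ℕ) (c : K) : Prop :=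
  a - c • ordMonomial Q.x m ∈ V K Q.x m

variable {Q : QNA K R N r}

theorem repr_mono (Q : QNA K R N r) (m n : Fin N → ℕ) :
    (pbwBasis Q).repr (ordMonomial Q.x m) n = if m = n then 1 else 0 := by
  rw [← pbwBasis_coe, Module.Basis.repr_self, Finsupp.single_apply]

theorem LT_iff {a : R} {m : Fin N → ℕ} {c : K} : LT Q a m c ↔ (pbwBasis Q).repr a m = c ∧
    ∀ n, toColex m < toColex n → (pbwBasis Q).repr a n = 0 := by
  unfold LT
  rw [mem_V_iff]
  simp only [map_sub, map_smul, Finsupp.sub_apply, Finsupp.smul_apply, repr_mono, smul_eq_mul]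
  constructor
  · intro h
    constructor
    · by_contra hne
      have := h m (by simpa [sub_eq_zero] using hne)
      exact lt_irrefl _ this
    · intro n hn
      by_contra hne
      have hmn : m ≠ n := by rintro rfl; exact lt_irrefl _ hn
      have := h n (by simpa [hmn] using hne)
      exact lt_asymm this hn
  · rintro ⟨h1, h2⟩ n hn
    rcases lt_trichotomy (toColex n) (toColex m) with h | h | h
    · exact h
    · have : n = m := toColex.injective h
      subst this
      simp [h1] at hn
    · have hmn : m ≠ n := by rintro rfl; exact lt_irrefl _ h
      simp [hmn, h2 n h] at hn

theorem LT_unique {a : R} {m n : Fin N → ℕ} {c d : K} (h : LT Q a m c) (h' : LT Q a n d)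
    (hc : c ≠ 0) (hd : d ≠ 0) : m = n ∧ c = d := by
  rw [LT_iff] at h h'
  have : m = n := by
    apply toColex.injective
    rcases lt_trichotomy (toColex m) (toColex n) with hlt | he | hlt
    · exact absurd (h'.1.symm.trans (h.2 n hlt)) hd
    · exact he
    · exact absurd (h.1.symm.trans (h'.2 m hlt)) hc
  subst this
  exact ⟨rfl, h.1.symm.trans h'.1⟩

theorem LT_ne_zero {a : R} {m : Fin N → ℕ} {c : K} (h : LT Q a m c) (hc : c ≠ 0) : a ≠ 0 := by
  rintro rfl
  rw [LT_iff] at h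
  exact hc (by simpa using h.1.symm)

theorem LT_exists (Q : QNA K R N r) {a : R} (ha : a ≠ 0) : ∃ m c, c ≠ 0 ∧ LT Q a m c := by
  have hne : ((pbwBasis Q).repr a).support.Nonempty := by
    rw [Finsupp.support_nonempty_iff]
    simpa using ha
  obtain ⟨m, hm, hmax⟩ := Finset.exists_max_image _ (fun n => toColex n) hne
  refine ⟨m, _, Finsupp.mem_support_iff.1 hm, LT_iff.2 ⟨rfl, fun n hn => ?_⟩⟩
  by_contra h0
  exact absurd hn (not_lt.2 (hmax n (Finsupp.mem_support_iff.2 h0)))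

theorem LT_add {a b : R} {m : Fin N → ℕ} {c : K} (h : LT Q a m c) (hb : b ∈ V K Q.x m) :
    LT Q (a + b) m c := by
  unfold LT at *
  rw [add_sub_right_comm]
  exact Submodule.add_mem _ h hb

theorem LT_smul {a : R} {m : Fin N → ℕ} {c : K} (h : LT Q a m c) (t : K) :
    LT Q (t • a) m (t * c) := by
  unfold LT at *
  rw [mul_smul, ← smul_sub]
  exact Submodule.smul_mem _ _ h

theorem LT_mem_V {a : R} {m n : Fin N → ℕ} {c : K} (h : LT Q a m c)
    (hmn : toColex m < toColex n) : a ∈ V K Q.x n := by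
  have := Submodule.add_mem _ (V_mono Q.x hmn.le h) (Submodule.smul_mem _ c (mono_mem_V Q.x hmn))
  simpa using this

theorem mono_mul (lam2 : Fin N → Fin N → Kˣ)
    (hlam2 : ∀ k l : Fin N, l < k → Q.act (Q.h k) (Q.x l) = ((lam2 k l : Kˣ) : K) • Q.x l)
    (f g : Fin N → ℕ) : LT Q (ordMonomial Q.x f * ordMonomial Q.x g) (f + g)
      (Mk lam2 f g N : Kˣ) := by
  have := pm_mul Q lam2 hlam2 f g N le_rfl
  rw [W_eq_V] at this
  simpa only [LT, ordMonomial_eq_pm] using this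

theorem LT_mul (lam2 : Fin N → Fin N → Kˣ)
    (hlam2 : ∀ k l : Fin N, l < k → Q.act (Q.h k) (Q.x l) = ((lam2 k l : Kˣ) : K) • Q.x l)
    {a b : R} {f g : Fin N → ℕ} {c d : K} (ha : LT Q a f c) (hb : LT Q b g d) :
    LT Q (a * b) (f + g) (c * d * (Mk lam2 f g N : Kˣ)) := by
  have key : ∀ S T : Set (Fin N → ℕ), (∀ s ∈ S, ∀ t ∈ T, toColex (s + t) < toColex (f + g)) →
      ∀ a ∈ Submodule.span K (ordMonomial Q.x '' S), ∀ b ∈ Submodule.span K (ordMonomial Q.x '' T),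
      a * b ∈ V K Q.x (f + g) := by
    intro S T h a ha b hb
    have h1 := Submodule.mul_mem_mul ha hb
    rw [Submodule.span_mul_span] at h1
    refine Submodule.span_le.2 ?_ h1
    rintro _ ⟨_, ⟨s, hs, rfl⟩, _, ⟨t, ht, rfl⟩, rfl⟩
    exact LT_mem_V (mono_mul lam2 hlam2 s t) (h s hs t ht)
  have e : a * b = (c * d) • (ordMonomial Q.x f * ordMonomial Q.x g) +
      ((a - c • ordMonomial Q.x f) * (b - d • ordMonomial Q.x g) +
      c • (ordMonomial Q.x f * (b - d • ordMonomial Q.x g)) +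
      d • ((a - c • ordMonomial Q.x f) * ordMonomial Q.x g)) := by
    simp only [sub_mul, mul_sub, smul_sub, smul_mul_assoc, mul_smul_comm, smul_smul, mul_comm c d]
    abel
  rw [e]
  refine LT_add (LT_smul (mono_mul lam2 hlam2 f g) _) ?_
  have hf : ordMonomial Q.x f ∈ Submodule.span K (ordMonomial Q.x '' {f}) :=
    Submodule.subset_span ⟨f, rfl, rfl⟩
  have hg : ordMonomial Q.x g ∈ Submodule.span K (ordMonomial Q.x '' {g}) :=
    Submodule.subset_span ⟨g, rfl, rfl⟩
  refine Submodule.add_mem _ (Submodule.add_mem _ ?_ (Submodule.smul_mem _ _ ?_))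
    (Submodule.smul_mem _ _ ?_)
  · exact key _ _ (fun s hs t ht => colex_add_lt hs (le_of_lt ht)) _ ha _ hb
  · exact key {f} _ (fun s hs t ht => colex_add_lt' (by rw [Set.mem_singleton_iff.1 hs]) ht) _ hf _ hb
  · exact key _ {g} (fun s hs t ht => colex_add_lt hs (by rw [Set.mem_singleton_iff.1 ht])) _ ha _ hg

theorem isDomain (lam2 : Fin N → Fin N → Kˣ)
    (hlam2 : ∀ k l : Fin N, l < k → Q.act (Q.h k) (Q.x l) = ((lam2 k l : Kˣ) : K) • Q.x l) :
    IsDomain R := by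
  have : Nontrivial R := ⟨ordMonomial Q.x 0, 0, Q.pbw.ne_zero 0⟩
  have : NoZeroDivisors R := ⟨by
    intro a b h
    by_contra! hab
    obtain ⟨m, c, hc, hm⟩ := LT_exists Q hab.1
    obtain ⟨n, d, hd, hn⟩ := LT_exists Q hab.2
    exact LT_ne_zero (LT_mul lam2 hlam2 hm hn)
      (mul_ne_zero (mul_ne_zero hc hd) (Units.ne_zero _)) h⟩
  exact NoZeroDivisors.to_isDomain R

/-- support below `k` -/
def SuppLt (m : Fin N → ℕ) (k : ℕ) : Prop := ∀ l : Fin N, k ≤ (l : ℕ) → m l = 0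

theorem mono_eq_pm (x : Fin N → R) {m : Fin N → ℕ} {k : ℕ} (hk : k ≤ N) (h : SuppLt m k) :
    ordMonomial x m = pm x m k := by
  rw [ordMonomial_eq_pm, pm_stable x k h N hk]

theorem Rsub_le_span' (Q : QNA K R N r) {k : ℕ} (hk : k ≤ N) {a : R} (ha : a ∈ Rsub K Q.x k) :
    a ∈ Submodule.span K (ordMonomial Q.x '' {m | SuppLt m k}) := by
  refine Submodule.span_mono ?_ (Rsub_le_span Q k hk ha)
  rintro _ ⟨f, rfl⟩
  have hs : SuppLt (fun l : Fin N => if (l : ℕ) < k then f l else 0) k := fun l hl => by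
    simp [not_lt.2 hl]
  refine ⟨_, hs, ?_⟩
  rw [mono_eq_pm Q.x hk hs]
  refine pm_congr _ _ fun l hl => by simp [hl]

theorem suppLt_of_mem {k : ℕ} (hk : k ≤ N) {a : R} (ha : a ∈ Rsub K Q.x k) {m : Fin N → ℕ} {c : K}
    (hc : c ≠ 0) (h : LT Q a m c) : SuppLt m k := by
  have h1 := Rsub_le_span' Q hk ha
  rw [← pbwBasis_coe, Module.Basis.mem_span_image] at h1
  exact h1 (Finset.mem_coe.2 (Finsupp.mem_support_iff.2 (by rw [(LT_iff.1 h).1]; exact hc)))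

theorem suppLt_of_lt {k : ℕ} {m n : Fin N → ℕ} (hm : SuppLt m k) (h : toColex n ≤ toColex m) :
    SuppLt n k := by
  rcases h.lt_or_eq with h | h
  · obtain ⟨j, h1, h2⟩ := (colex_lt_iff n m).1 h
    intro l hl
    rcases lt_or_ge j l with hjl | hjl
    · rw [h2 l hjl, hm l hl]
    · have : m j = 0 := hm j (hl.trans hjl)
      omega
  · rw [toColex.injective h]; exact hm

theorem mem_of_suppLt {k : ℕ} (hk : k ≤ N) {a : R} {m : Fin N → ℕ} {c : K} (h : LT Q a m c)
    (hm : SuppLt m k) : a ∈ Rsub K Q.x k := by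
  have h1 : ∀ n, toColex n ≤ toColex m → ordMonomial Q.x n ∈ Rsub K Q.x k := by
    intro n hn
    rw [mono_eq_pm Q.x hk (suppLt_of_lt hm hn)]
    exact pm_mem _ _ _
  have h2 : V K Q.x m ≤ Subalgebra.toSubmodule (Rsub K Q.x k) := by
    refine Submodule.span_le.2 ?_
    rintro _ ⟨n, hn, rfl⟩
    exact h1 n (le_of_lt hn)
  have := Subalgebra.add_mem _ (h2 h) (Subalgebra.smul_mem _ (h1 m le_rfl) c)
  simpa using this

theorem Rsub_le_V (Q : QNA K R N r) (k : Fin N) {a : R} (ha : a ∈ Rsub K Q.x (k : ℕ))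
    {m : Fin N → ℕ} (hm : m k ≠ 0) : a ∈ V K Q.x m := by
  refine Submodule.span_mono (Set.image_mono ?_) (Rsub_le_span' Q k.2.le ha)
  intro n hn
  change toColex n < toColex m
  by_contra hle
  have hle : toColex m ≤ toColex n := not_lt.1 hle
  exact hm (suppLt_of_lt hn hle k le_rfl)

theorem suppLt_mono {m : Fin N → ℕ} {j k : ℕ} (h : SuppLt m j) (hjk : j ≤ k) : SuppLt m k :=
  fun l hl => h l (hjk.trans hl)

theorem LT_x (Q : QNA K R N r) (k : Fin N) (i : ℕ) : LT Q (Q.x k ^ i) (Pi.single k i) 1 := by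
  have : ordMonomial Q.x (Pi.single k i) = Q.x k ^ i := by
    rw [mono_eq_pm (k := k + 1) _ k.2, pm_succ _ _ k.2]
    · have : pm Q.x (Pi.single k i) k = pm Q.x 0 k := by
        refine pm_congr _ _ fun l hl => ?_
        rw [Pi.single_eq_of_ne]; rfl
        rintro rfl; omega
      rw [this, pm_stable Q.x (f := 0) 0 (fun _ _ => rfl) k (Nat.zero_le _)]
      simp [pm]
    · intro l hl
      rw [Pi.single_eq_of_ne]
      rintro rfl; omega
  unfold LT
  rw [this]; simp

theorem LT_one (Q : QNA K R N r) : LT Q 1 0 1 := by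
  have : ordMonomial Q.x 0 = 1 := by simp [ordMonomial]
  unfold LT
  rw [this]; simp

end Lead

end QTE

namespace QTE
open scoped nonZeroDivisors

section Fract

variable {K : Type u} [Field K] {R : Type v} [Ring R] [Algebra K R] {r N : ℕ}

theorem exists_fract [IsDomain R]
    (hL : ∀ a b : R, b ≠ 0 → ∃ u v : R, u ≠ 0 ∧ u * a = v * b)
    (hR : ∀ a b : R, b ≠ 0 → ∃ u v : R, u ≠ 0 ∧ a * u = b * v) :
    ∃ (D : Type v) (_ : DivisionRing D) (_ : Algebra K D) (ι : R →ₐ[K] D), IsFractionEmb K ι := by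
  choose u v hu huv using hL
  let _ : OreLocalization.OreSet R⁰ := OreLocalization.oreSetOfNoZeroDivisors
    (fun r s => v r s (nonZeroDivisors.ne_zero s.2))
    (fun r s => ⟨u r s (nonZeroDivisors.ne_zero s.2), mem_nonZeroDivisors_of_ne_zero (hu _ _ _)⟩)
    (fun r s => huv r s _)
  let ι : R →ₐ[K] OreLocalization R⁰ R :=
    { OreLocalization.numeratorRingHom with
      commutes' := fun c => rfl }
  refine ⟨OreLocalization R⁰ R, inferInstance, inferInstance, ι, ?_, ?_⟩
  · exact OreLocalization.numeratorHom_inj inf_le_left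
  · intro d
    induction d with
    | _ a s =>
      obtain ⟨b, a', hb, e⟩ := hR a (s : R) (nonZeroDivisors.ne_zero s.2)
      refine ⟨a', b, hb, ?_⟩
      change (OreLocalization.oreDiv a s) * (OreLocalization.oreDiv b 1) =
        OreLocalization.oreDiv a' 1
      have h1 : (OreLocalization.oreDiv a s) * (OreLocalization.oreDiv b (1 : R⁰)) =
        OreLocalization.oreDiv (a * b) s := OreLocalization.smul_div_one
      rw [h1, e]
      have := OreLocalization.expand' a' (1 : R⁰) s
      rw [this]
      congr 1
      simp

theorem fract_of_QNA (Q : QNA K R N r) [IsDomain R] :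
    ∃ (D : Type v) (_ : DivisionRing D) (_ : Algebra K D) (ι : R →ₐ[K] D), IsFractionEmb K ι := by
  have htop : ∀ a : R, a ∈ Rsub K Q.x N := by
    have : Rsub K Q.x N = ⊤ := by
      rw [← Q.gen, Rsub]
      congr 1
      ext z; constructor
      · rintro ⟨l, _, rfl⟩; exact ⟨l, rfl⟩
      · rintro ⟨l, rfl⟩; exact ⟨l, l.2, rfl⟩
    rw [this]; intro a; trivial
  have hL := LOre_chain Q.x (fun k => Q.act (Q.h k)) (fun k a ha => act_mem Q _ _ ha)
    (fun k => delta_mem Q k) (fun k a _ h0 => by simpa using h0) N le_rfl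
  have hop : ∀ n a, a ∈ Rsub K (fun k => MulOpposite.op (Q.x k)) n ↔
      MulOpposite.unop a ∈ Rsub K Q.x n := by
    intro n a
    have : Rsub K (fun k => MulOpposite.op (Q.x k)) n = (Rsub K Q.x n).op := by
      unfold Rsub
      rw [Subalgebra.op_adjoin]
      congr 1
      ext z
      constructor
      · rintro ⟨l, hl, rfl⟩
        exact ⟨l, hl, rfl⟩
      · rintro ⟨l, hl, h⟩
        exact ⟨l, hl, MulOpposite.unop_injective h⟩
    rw [this]; exact Subalgebra.mem_op
  have hRR := LOre_chain (K := K) (fun k => MulOpposite.op (Q.x k))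
    (fun k a => MulOpposite.op ((Q.act (Q.h k)).symm (MulOpposite.unop a)))
    (fun k a ha => by
      rw [hop] at ha ⊢
      exact act_symm_mem Q _ _ ha)
    (fun k a ha => by
      rw [hop] at ha ⊢
      have h1 := delta_mem Q k _ (act_symm_mem Q (Q.h k) _ ha)
      rw [AlgEquiv.apply_symm_apply] at h1
      have := Subalgebra.neg_mem _ h1
      simpa using this)
    (fun k a _ h0 => by simpa using h0) N le_rfl
  refine exists_fract (K := K) ?_ ?_
  · intro a b hb
    obtain ⟨u, _, v, _, hu, e⟩ := hL a (htop a) b (htop b) hb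
    exact ⟨u, v, hu, e⟩
  · intro a b hb
    obtain ⟨u, _, v, _, hu, e⟩ := hRR (MulOpposite.op a) ((hop _ _).2 (htop _))
      (MulOpposite.op b) ((hop _ _).2 (htop _)) (by simpa using hb)
    refine ⟨MulOpposite.unop u, MulOpposite.unop v, by simpa using hu, ?_⟩
    simpa using congrArg MulOpposite.unop e

end Fract

section Laurent

variable {K : Type u} [Field K] {D : Type v} [DivisionRing D] [Algebra K D]

/-- quasi-commutation -/
def QC (K : Type u) [Field K] {D : Type v} [DivisionRing D] [Algebra K D] (a b : D) : Prop :=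
  ∃ s : Kˣ, a * b = (s : K) • (b * a)

theorem QC.symm {a b : D} (h : QC K a b) : QC K b a := by
  obtain ⟨s, h⟩ := h
  exact ⟨s⁻¹, by rw [h, smul_smul]; simp⟩

theorem QC.mul {a b c : D} (h : QC K a b) (h' : QC K a c) : QC K a (b * c) := by
  obtain ⟨s, h⟩ := h
  obtain ⟨t, h'⟩ := h'
  refine ⟨s * t, ?_⟩
  rw [← mul_assoc, h, smul_mul_assoc, mul_assoc, h', mul_smul_comm, smul_smul, mul_assoc,
    Units.val_mul]

theorem QC.one (a : D) : QC K a 1 := ⟨1, by simp⟩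

theorem QC.inv {a b : D} (h : QC K a b) : QC K a b⁻¹ := by
  by_cases hb : b = 0
  · subst hb; exact ⟨1, by simp⟩
  obtain ⟨s, h⟩ := h
  refine ⟨s⁻¹, ?_⟩
  have h1 : b⁻¹ * a = b⁻¹ * (a * b) * b⁻¹ := by
    rw [mul_assoc, mul_assoc, mul_inv_cancel₀ hb, mul_one]
  have h2 : b⁻¹ * a = (s : K) • (a * b⁻¹) := by
    rw [h1, h, mul_smul_comm, smul_mul_assoc, ← mul_assoc, inv_mul_cancel₀ hb, one_mul]
  rw [h2, smul_smul]; simp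

theorem QC.pow {a b : D} (h : QC K a b) (n : ℕ) : QC K a (b ^ n) := by
  induction n with
  | zero => simpa using QC.one a
  | succ n ih => rw [pow_succ]; exact ih.mul h

theorem QC.zpow {a b : D} (h : QC K a b) (n : ℤ) : QC K a (b ^ n) := by
  cases n with
  | ofNat n => simpa using h.pow n
  | negSucc n => rw [zpow_negSucc]; exact (h.pow _).inv

theorem laurent_mul {I : Type*} (Y : I → D) (h0 : ∀ k, Y k ≠ 0) (h : ∀ k l, QC K (Y k) (Y l))
    (f g : I → ℤ) (L : List I) : ∃ s : Kˣ, (L.map fun k => Y k ^ f k).prod *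
      (L.map fun k => Y k ^ g k).prod = (s : K) • (L.map fun k => Y k ^ (f k + g k)).prod := by
  induction L with
  | nil => exact ⟨1, by simp⟩
  | cons k L ih =>
    obtain ⟨s, hs⟩ := ih
    have hq : ∀ L : List I, QC K (Y k ^ g k) (L.map fun k => Y k ^ f k).prod := by
      intro L
      induction L with
      | nil => simpa using QC.one _
      | cons l L ih =>
        rw [List.map_cons, List.prod_cons]
        exact QC.mul (((h l k).zpow _).symm.zpow _) ih
    obtain ⟨t, ht⟩ := (hq L).symm
    refine ⟨t * s, ?_⟩
    simp only [List.map_cons, List.prod_cons]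
    rw [zpow_add₀ (h0 k)]
    calc _ = Y k ^ f k * ((L.map fun k => Y k ^ f k).prod * Y k ^ g k) *
          (L.map fun k => Y k ^ g k).prod := by simp only [mul_assoc]
      _ = (t : K) • (Y k ^ f k * Y k ^ g k * ((L.map fun k => Y k ^ f k).prod *
          (L.map fun k => Y k ^ g k).prod)) := by
          rw [ht]; simp only [mul_assoc, mul_smul_comm, smul_mul_assoc]
      _ = _ := by rw [hs, mul_smul_comm, smul_smul, Units.val_mul]

end Laurent
end QTE

namespace QTE

section Ebar

variable {N : ℕ}

/-- The vectors `ē_k` with natural number entries. -/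
def ebarN (η : Fin N → ℤ) (k : Fin N) : Fin N → ℕ :=
  fun l => if l ≤ k ∧ η l = η k then 1 else 0

theorem ebar_eq (η : Fin N → ℤ) (k : Fin N) : ebar η k = fun l => ((ebarN η k l : ℕ) : ℤ) := by
  funext l
  unfold ebar ebarN
  split_ifs <;> simp

theorem ebarN_self (η : Fin N → ℤ) (k : Fin N) : ebarN η k k = 1 := by simp [ebarN]

theorem ebarN_gt (η : Fin N → ℤ) {k l : Fin N} (h : k < l) : ebarN η k l = 0 := by
  simp [ebarN, not_le.2 h]

theorem ebarN_inj (η : Fin N → ℤ) {k l : Fin N} (h : ebarN η k = ebarN η l) : k = l := by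
  rcases lt_trichotomy k l with hl | hl | hl
  · have := congrFun h l
    rw [ebarN_self, ebarN_gt η hl] at this; omega
  · exact hl
  · have := congrFun h k
    rw [ebarN_self, ebarN_gt η hl] at this; omega

theorem suppLt_ebarN (η : Fin N → ℤ) (k : Fin N) : SuppLt (ebarN η k) (k + 1) := by
  intro l hl
  exact ebarN_gt η (by rw [Fin.lt_def]; omega)

theorem ebarN_bot (η : Fin N → ℤ) (k : Fin N) (h : ∀ l, l < k → η l ≠ η k) :
    ebarN η k = Pi.single k 1 := by
  funext l
  rcases lt_trichotomy l k with hl | rfl | hl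
  · rw [Pi.single_eq_of_ne hl.ne]; simp [ebarN, h l hl]
  · simp [ebarN]
  · rw [Pi.single_eq_of_ne hl.ne', ebarN_gt η hl]

theorem predIdx_bot {η : Fin N → ℤ} {k : Fin N} (h : predIdx η k = ⊥) :
    ∀ l, l < k → η l ≠ η k := by
  intro l hl he
  rw [predIdx, Finset.max_eq_bot] at h
  have : l ∈ (Finset.univ.filter fun l => l < k ∧ η l = η k) := by simp [hl, he]
  rw [h] at this
  simp at this

theorem predIdx_coe {η : Fin N → ℤ} {k l : Fin N} (h : predIdx η k = (l : WithBot (Fin N))) :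
    l < k ∧ η l = η k ∧ ∀ l', l < l' → l' < k → η l' ≠ η k := by
  have h1 := Finset.mem_of_max h
  simp only [Finset.mem_filter, Finset.mem_univ, true_and] at h1
  refine ⟨h1.1, h1.2, fun l' hl' hk he => ?_⟩
  have := Finset.le_max_of_eq (a := l') (by simp [hk, he]) h
  exact absurd hl' (not_lt.2 this)

theorem ebarN_coe {η : Fin N → ℤ} {k l : Fin N} (h : predIdx η k = (l : WithBot (Fin N))) :
    ebarN η k = ebarN η l + Pi.single k 1 := by
  obtain ⟨h1, h2, h3⟩ := predIdx_coe h
  funext m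
  rw [Pi.add_apply]
  rcases lt_trichotomy m k with hm | rfl | hm
  · rw [Pi.single_eq_of_ne hm.ne]
    rcases le_or_gt m l with hml | hml
    · simp [ebarN, hm.le, hml, h2]
    · simp [ebarN, h3 m hml hm, not_le.2 hml]
  · rw [ebarN_self, ebarN_gt η h1]; simp
  · rw [ebarN_gt η hm, ebarN_gt η (h1.trans hm), Pi.single_eq_of_ne hm.ne', add_zero]

end Ebar

section Y

variable {K : Type u} [Field K] {R : Type v} [Ring R] [Algebra K R] {r N : ℕ}

theorem LT_in_V {Q : QNA K R N r} {a : R} {m : Fin N → ℕ} {c : K} (h : LT Q a m c)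
    (ha : a ∈ V K Q.x m) : c = 0 := by
  by_contra hc
  exact lt_irrefl _ ((mem_V_iff Q m a).1 ha m (by rw [(LT_iff.1 h).1]; exact hc))

theorem Ffil_le_V (Q : QNA K R N r) (lam2 : Fin N → Fin N → Kˣ)
    (hlam2 : ∀ k l : Fin N, l < k → Q.act (Q.h k) (Q.x l) = ((lam2 k l : Kˣ) : K) • Q.x l)
    (k : Fin N) (h : Fin N → ℕ) (hs : SuppLt h (k + 1)) (n : ℕ) (hn : n ≤ h k) {b : R}
    (hb : b ∈ Ffil (Rsub K Q.x (k : ℕ)) (Q.x k) n) : b ∈ V K Q.x h := by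
  induction n generalizing b with
  | zero => rw [mem_Ffil_zero] at hb; rw [hb]; exact Submodule.zero_mem _
  | succ n ih =>
    obtain ⟨f, hf, a, ha, rfl⟩ := mem_Ffil_succ.1 hb
    refine Submodule.add_mem _ (ih (by omega) hf) ?_
    by_cases h0 : a = 0
    · rw [h0, zero_mul]; exact Submodule.zero_mem _
    obtain ⟨m, c, hc, hm⟩ := LT_exists Q h0
    have hsm := suppLt_of_mem k.2.le ha hc hm
    refine LT_mem_V (LT_mul lam2 hlam2 hm (LT_x Q k n)) ((colex_lt_iff _ _).2 ⟨k, ?_, ?_⟩)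
    · rw [Pi.add_apply, hsm k le_rfl, Pi.single_eq_same]; omega
    · intro i hi
      rw [Pi.add_apply, hsm i hi.le, Pi.single_eq_of_ne hi.ne', hs i hi, add_zero]

theorem hfree (Q : QNA K R N r) (lam2 : Fin N → Fin N → Kˣ)
    (hlam2 : ∀ k l : Fin N, l < k → Q.act (Q.h k) (Q.x l) = ((lam2 k l : Kˣ) : K) • Q.x l)
    (k : Fin N) : ∀ a ∈ Rsub K Q.x (k : ℕ), ∀ n,
      a * Q.x k ^ n ∈ Ffil (Rsub K Q.x (k : ℕ)) (Q.x k) n → a = 0 := by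
  intro a ha n h
  by_contra h0
  obtain ⟨m, c, hc, hm⟩ := LT_exists Q h0
  have hsm := suppLt_of_mem k.2.le ha hc hm
  have h1 := LT_mul lam2 hlam2 hm (LT_x Q k n)
  have h2 := LT_in_V h1 (Ffil_le_V Q lam2 hlam2 k _ ?_ n ?_ h)
  · simp [hc] at h2
  · intro i hi
    have hi' : k < i := hi
    rw [Pi.add_apply, hsm i hi'.le, Pi.single_eq_of_ne hi'.ne', add_zero]
  · simp

theorem hunit (Q : QNA K R N r) (lam2 : Fin N → Fin N → Kˣ)
    (hlam2 : ∀ k l : Fin N, l < k → Q.act (Q.h k) (Q.x l) = ((lam2 k l : Kˣ) : K) • Q.x l)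
    (k : ℕ) (hk : k ≤ N) (a b : R) (h : a * b = 1) : b ∈ Rsub K Q.x k := by
  have := isDomain (Q := Q) lam2 hlam2
  have ha : a ≠ 0 := by rintro rfl; simp at h
  have hb : b ≠ 0 := by rintro rfl; simp at h
  obtain ⟨m, c, hc, hm⟩ := LT_exists Q ha
  obtain ⟨n, d, hd, hn⟩ := LT_exists Q hb
  have h1 := LT_mul lam2 hlam2 hm hn
  rw [h] at h1
  have h2 := (LT_unique h1 (LT_one Q) (by simp [hc, hd]) one_ne_zero).1
  refine mem_of_suppLt hk hn fun l _ => ?_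
  have := congrFun h2 l
  simp at this
  exact this.2

theorem LT_y (Q : QNA K R N r) (lam2 : Fin N → Fin N → Kˣ)
    (hlam2 : ∀ k l : Fin N, l < k → Q.act (Q.h k) (Q.x l) = ((lam2 k l : Kˣ) : K) • Q.x l)
    (η : Fin N → ℤ) (c y : Fin N → R) (hseq : IsPrimeSeq K Q η c y) (k : Fin N) :
    ∃ d : K, d ≠ 0 ∧ LT Q (y k) (ebarN η k) d := by
  have := isDomain (Q := Q) lam2 hlam2
  induction k using WellFoundedLT.induction with
  | _ k ih =>
  by_cases hδ : deltaZero K Q k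
  · have hyk := hseq.rec_delta_zero k hδ
    have hx1 : LT Q (y k) (Pi.single k 1) 1 := by
      have := LT_x Q k 1
      rwa [pow_one, ← hyk] at this
    suffices h : ∀ l, l < k → η l ≠ η k by
      refine ⟨1, one_ne_zero, ?_⟩
      rw [ebarN_bot η k h]
      exact hx1
    rcases hp : predIdx η k with _ | l
    · exact predIdx_bot hp
    exfalso
    obtain ⟨h1, h2, h3⟩ := predIdx_coe hp
    have hk0 : 0 < (k : ℕ) := lt_of_le_of_lt (Nat.zero_le _) h1
    set k' : Fin N := ⟨k - 1, by omega⟩ with hk'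
    have hkk : (k' : ℕ) + 1 = k := by simp [hk']; omega
    have hpr := (hseq.prime_iff k' (y l)).2 ⟨l, by rw [Fin.le_def]; have : (l:ℕ) < k := h1; omega, by
      intro l' hl' hl''
      rw [h2]
      exact h3 l' hl' (by rw [Fin.lt_def]; rw [Fin.le_def] at hl''; omega), 1, by simp⟩
    rw [hkk] at hpr
    obtain ⟨hpr, f, hf⟩ := hpr
    have hlift : IsPrimeIn K (Rsub K Q.x ((k : ℕ) + 1)) (y l) := by
      refine prime_lift (σ := Q.act (Q.h k)) (x := Q.x k) (Rsub_mono Q.x (Nat.le_succ _))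
        (x_mem_Rsub Q.x (Nat.lt_succ_self _))
        (s := Q.x '' {l : Fin N | (l : ℕ) < (k : ℕ) + 1}) ?_ rfl
        (fun a ha => act_mem Q _ _ ha) (fun a ha => act_symm_mem Q _ _ ha) ?_
        (hfree Q lam2 hlam2 k) (fun a _ b _ h => hunit Q lam2 hlam2 k k.2.le a b h)
        _ (hf (Q.h k)) hpr
      · rintro _ ⟨j, hj, rfl⟩
        rcases Nat.lt_succ_iff_lt_or_eq.1 hj with hj | hj
        · exact Or.inl (x_mem_Rsub Q.x hj)
        · right; congr 1; exact Fin.ext hj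
      · intro a ha
        exact sub_eq_zero.1 (hδ a ha)
    obtain ⟨m, hmk, hm, t, ht⟩ := (hseq.prime_iff k (y l)).1 ⟨hlift, f, hf⟩
    obtain ⟨d, hd, hld⟩ := ih l h1
    rcases hmk.lt_or_eq with hmk | rfl
    · obtain ⟨d', hd', hmd⟩ := ih m hmk
      have h4 := LT_smul hmd (t : K)
      rw [← ht] at h4
      have h5 := ebarN_inj η (LT_unique hld h4 hd (by simp [hd'])).1
      subst h5
      exact hm k hmk le_rfl h2.symm
    · have h4 := LT_smul hx1 (t : K)
      rw [← ht] at h4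
      have h5 := congrFun (LT_unique hld h4 hd (by simp)).1 m
      rw [ebarN_gt η h1] at h5
      simp at h5
  · have hyk := hseq.rec_delta_ne k hδ
    have hck : -(c k) ∈ V K Q.x (ebarN η k) :=
      Submodule.neg_mem _ (Rsub_le_V Q k (hseq.c_mem k hδ) (by simp [ebarN_self]))
    rcases hp : predIdx η k with _ | l
    · have hp' : predIdx η k = ⊥ := hp
      rw [hp', WithBot.recBotCoe_bot, one_mul, sub_eq_add_neg] at hyk
      refine ⟨1, one_ne_zero, ?_⟩
      rw [hyk]
      refine LT_add ?_ hck
      rw [ebarN_bot η k (predIdx_bot hp')]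
      simpa using LT_x Q k 1
    · have hp' : predIdx η k = (l : WithBot (Fin N)) := hp
      rw [hp', WithBot.recBotCoe_coe, sub_eq_add_neg] at hyk
      obtain ⟨d, hd, hl⟩ := ih l (predIdx_coe hp').1
      have := LT_mul lam2 hlam2 hl (LT_x Q k 1)
      rw [pow_one, ← ebarN_coe hp'] at this
      refine ⟨_, ?_, hyk ▸ LT_add this hck⟩
      simp [hd]

theorem y_mem (Q : QNA K R N r) (lam2 : Fin N → Fin N → Kˣ)
    (hlam2 : ∀ k l : Fin N, l < k → Q.act (Q.h k) (Q.x l) = ((lam2 k l : Kˣ) : K) • Q.x l)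
    (η : Fin N → ℤ) (c y : Fin N → R) (hseq : IsPrimeSeq K Q η c y) (k : Fin N) :
    y k ∈ Rsub K Q.x ((k : ℕ) + 1) := by
  obtain ⟨d, _, h⟩ := LT_y Q lam2 hlam2 η c y hseq k
  exact mem_of_suppLt k.2 h (suppLt_ebarN η k)

theorem y_prime (Q : QNA K R N r)
    (η : Fin N → ℤ) (c y : Fin N → R) (hseq : IsPrimeSeq K Q η c y) (k : Fin N) :
    IsPrimeIn K (Rsub K Q.x ((k : ℕ) + 1)) (y k) :=
  ((hseq.prime_iff k (y k)).2 ⟨k, le_rfl, fun l' h h' => absurd h (not_lt.2 h'), 1, by simp⟩).1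

/-- If `y a = b y` then `a`, `b` have the same leading exponent. -/
theorem conj_mem (Q : QNA K R N r) (lam2 : Fin N → Fin N → Kˣ)
    (hlam2 : ∀ k l : Fin N, l < k → Q.act (Q.h k) (Q.x l) = ((lam2 k l : Kˣ) : K) • Q.x l)
    {y a b : R} (hy : y ≠ 0) (h : y * a = b * y) (n : ℕ) (hn : n ≤ N) :
    a ∈ Rsub K Q.x n ↔ b ∈ Rsub K Q.x n := by
  have := isDomain (Q := Q) lam2 hlam2
  by_cases ha : a = 0
  · subst ha
    have : b = 0 := by simpa [hy, eq_comm] using h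
    subst this; rfl
  have hb : b ≠ 0 := by
    rintro rfl
    simp [hy, ha] at h
  obtain ⟨m, c, hc, hm⟩ := LT_exists Q ha
  obtain ⟨m', c', hc', hm'⟩ := LT_exists Q hb
  obtain ⟨f, d, hd, hf⟩ := LT_exists Q hy
  have h1 := LT_mul lam2 hlam2 hf hm
  have h2 := LT_mul lam2 hlam2 hm' hf
  rw [h] at h1
  have h3 := (LT_unique h1 h2 (by simp [hc, hd]) (by simp [hc', hd])).1
  rw [add_comm] at h3
  have h4 := add_right_cancel h3
  subst h4
  exact ⟨fun h => mem_of_suppLt hn hm' (suppLt_of_mem hn h hc hm),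
    fun h => mem_of_suppLt hn hm (suppLt_of_mem hn h hc' hm')⟩

theorem comm_lt (Q : QNA K R N r) (lam2 : Fin N → Fin N → Kˣ)
    (hlam2 : ∀ k l : Fin N, l < k → Q.act (Q.h k) (Q.x l) = ((lam2 k l : Kˣ) : K) • Q.x l)
    (η : Fin N → ℤ) (c y : Fin N → R) (hseq : IsPrimeSeq K Q η c y) (k l : Fin N) (hlk : l < k) :
    ∃ t : Kˣ, y k * y l = (t : K) • (y l * y k) := by
  have := isDomain (Q := Q) lam2 hlam2
  obtain ⟨hkm, hk0, -, hkl, hkr, -⟩ := y_prime Q η c y hseq k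
  have hle : Rsub K Q.x ((l : ℕ) + 1) ≤ Rsub K Q.x ((k : ℕ) + 1) :=
    Rsub_mono Q.x (by have : (l : ℕ) < k := hlk; omega)
  have hcm : ∀ {a b}, y k * a = b * y k →
      (a ∈ Rsub K Q.x ((l : ℕ) + 1) ↔ b ∈ Rsub K Q.x ((l : ℕ) + 1)) :=
    fun h => conj_mem Q lam2 hlam2 hk0 h _ l.2
  have hpl := y_prime Q η c y hseq l
  obtain ⟨b0, hb0, e0⟩ := hkr (y l) (hle hpl.1)
  have hb0' := (hcm e0).1 hpl.1
  have hpb : IsPrimeIn K (Rsub K Q.x ((l : ℕ) + 1)) b0 := by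
    refine prime_conj hk0 ?_ ?_ hb0' e0 hpl
    · intro a ha
      obtain ⟨b, _, e⟩ := hkr a (hle ha)
      exact ⟨b, (hcm e).1 ha, e⟩
    · intro b hb
      obtain ⟨a, _, e⟩ := hkl b (hle hb)
      exact ⟨a, (hcm e.symm).2 hb, e.symm⟩
  have hhom : ∃ f : Fin r → ℤ, IsEigenWith K Q.act f b0 := by
    obtain ⟨fk, hfk⟩ := hseq.homog k
    obtain ⟨fl, hfl⟩ := hseq.homog l
    refine ⟨fl, fun ξ => ?_⟩
    have h1 := congrArg (Q.act ξ) e0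
    rw [map_mul, map_mul, hfk ξ, hfl ξ, smul_mul_assoc, mul_smul_comm, mul_smul_comm] at h1
    have h2 := smul_right_injective R (Units.ne_zero (∏ i, ξ i ^ fk i : Kˣ)) h1
    rw [e0, ← smul_mul_assoc] at h2
    exact (mul_right_cancel₀ hk0 h2).symm
  obtain ⟨m, hm, -, t, ht⟩ := (hseq.prime_iff l b0).1 ⟨hpb, hhom⟩
  obtain ⟨dk, hdk, hLk⟩ := LT_y Q lam2 hlam2 η c y hseq k
  obtain ⟨dl, hdl, hLl⟩ := LT_y Q lam2 hlam2 η c y hseq l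
  obtain ⟨dm, hdm, hLm⟩ := LT_y Q lam2 hlam2 η c y hseq m
  have h1 := LT_mul lam2 hlam2 hLk hLl
  have h2 := LT_mul lam2 hlam2 (LT_smul hLm (t : K)) hLk
  rw [e0, ht] at h1
  have h3 := (LT_unique h1 h2 (by simp [hdk, hdl]) (by simp [hdm, hdk])).1
  rw [add_comm] at h3
  have h4 := ebarN_inj η (add_right_cancel h3)
  subst h4
  exact ⟨t, by rw [e0, ht, smul_mul_assoc]⟩

theorem below_top : below N N = Finset.univ := by
  ext l; simp [below]

theorem Mk_eq (lam2 : Fin N → Fin N → Kˣ) (f g : Fin N → ℕ) :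
    Mk lam2 f g N = ∏ k, ∏ l, if l < k then lam2 k l ^ (f k * g l) else 1 := by
  rw [Mk, below_top]
  refine Finset.prod_congr rfl fun k _ => ?_
  rw [below, Finset.prod_filter]
  rfl

theorem Omega_Mk (lam2 : Fin N → Fin N → Kˣ) (f g : Fin N → ℕ) :
    Omega K lam2 (fun k => (f k : ℤ)) (fun k => (g k : ℤ)) * Mk lam2 g f N = Mk lam2 f g N := by
  rw [Mk_eq lam2 g f, Finset.prod_comm, Mk_eq, Omega, ← Finset.prod_mul_distrib]
  refine Finset.prod_congr rfl fun k _ => ?_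
  rw [← Finset.prod_mul_distrib]
  refine Finset.prod_congr rfl fun l _ => ?_
  unfold omegaEntry
  rcases lt_trichotomy l k with h | rfl | h
  · simp only [if_neg h.ne', if_pos h, if_neg h.not_gt, mul_one]
    rw [← Nat.cast_mul, zpow_natCast]
  · simp
  · simp only [if_neg h.ne, if_pos h, if_neg h.not_gt]
    rw [← Nat.cast_mul, zpow_natCast, mul_comm (f k), inv_pow, inv_mul_cancel]

theorem comm_y (Q : QNA K R N r) (lam2 : Fin N → Fin N → Kˣ)
    (hlam2 : ∀ k l : Fin N, l < k → Q.act (Q.h k) (Q.x l) = ((lam2 k l : Kˣ) : K) • Q.x l)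
    (η : Fin N → ℤ) (c y : Fin N → R) (hseq : IsPrimeSeq K Q η c y) (k l : Fin N) :
    y k * y l = ((Omega K lam2 (ebar η k) (ebar η l) : Kˣ) : K) • (y l * y k) := by
  have hex : ∃ t : Kˣ, y k * y l = (t : K) • (y l * y k) := by
    rcases lt_trichotomy l k with h | rfl | h
    · exact comm_lt Q lam2 hlam2 η c y hseq k l h
    · exact ⟨1, by simp⟩
    · obtain ⟨t, ht⟩ := comm_lt Q lam2 hlam2 η c y hseq l k h
      exact ⟨t⁻¹, by rw [ht, smul_smul]; simp⟩
  obtain ⟨t, ht⟩ := hex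
  obtain ⟨dk, hdk, hLk⟩ := LT_y Q lam2 hlam2 η c y hseq k
  obtain ⟨dl, hdl, hLl⟩ := LT_y Q lam2 hlam2 η c y hseq l
  have h1 := LT_mul lam2 hlam2 hLk hLl
  have h2 := LT_smul (LT_mul lam2 hlam2 hLl hLk) (t : K)
  rw [ht] at h1
  have h3 := (LT_unique h1 h2 (by simp [hdk, hdl]) (by simp [hdl, hdk])).2
  have h4 : Mk lam2 (ebarN η k) (ebarN η l) N = t * Mk lam2 (ebarN η l) (ebarN η k) N := by
    apply Units.ext
    rw [Units.val_mul]
    apply mul_left_cancel₀ (mul_ne_zero hdk hdl)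
    rw [h3]; ring
  rw [← Omega_Mk] at h4
  have h5 := mul_right_cancel h4
  rw [ht, ebar_eq, ebar_eq, h5]

end Y
end QTE

namespace QTE

section Final

variable {K : Type u} [Field K] {R : Type v} [Ring R] [Algebra K R] {r N : ℕ}

theorem lin_indep_of_LT {Q : QNA K R N r} {I : Type*} (s : Finset I) (w : I → R)
    (E : I → Fin N → ℕ) (d : I → K) (hE : Set.InjOn E s) (hd : ∀ i, d i ≠ 0)
    (hw : ∀ i, LT Q (w i) (E i) (d i)) (g : I → K) (h : ∑ i ∈ s, g i • w i = 0) :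
    ∀ i ∈ s, g i = 0 := by
  classical
  by_contra! hne
  obtain ⟨i0, hi0, hgi0⟩ := hne
  obtain ⟨i, hi, hmax⟩ := Finset.exists_max_image (s.filter fun i => g i ≠ 0)
    (fun i => toColex (E i)) ⟨i0, by simp [hi0, hgi0]⟩
  rw [Finset.mem_filter] at hi
  have h1 := congrArg (fun a => (pbwBasis Q).repr a (E i)) h
  simp only [map_sum, map_smul, map_zero, Finsupp.coe_zero, Pi.zero_apply,
    Finsupp.coe_finsetSum, Finset.sum_apply, Finsupp.smul_apply, smul_eq_mul] at h1
  rw [Finset.sum_eq_single_of_mem i hi.1] at h1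
  · rw [(LT_iff.1 (hw i)).1] at h1
    exact mul_ne_zero hi.2 (hd i) h1
  · intro j hj hji
    by_cases hg : g j = 0
    · rw [hg, zero_mul]
    have hle := hmax j (by simp [hj, hg])
    have hlt : toColex (E j) < toColex (E i) := lt_of_le_of_ne hle fun e =>
      hji (hE hj hi.1 (toColex.injective e))
    rw [(LT_iff.1 (hw j)).2 _ hlt, mul_zero]

theorem E_inj (η : Fin N → ℤ) {m n : Fin N → ℕ}
    (h : ∑ k, m k • ebarN η k = ∑ k, n k • ebarN η k) : m = n := by
  funext j
  induction j using WellFoundedGT.induction with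
  | _ j ih =>
  have h1 := congrFun h j
  simp only [Finset.sum_apply, Pi.smul_apply, smul_eq_mul] at h1
  rw [← Finset.add_sum_erase _ _ (Finset.mem_univ j),
    ← Finset.add_sum_erase _ (fun k => n k * ebarN η k j) (Finset.mem_univ j)] at h1
  have h2 : ∑ k ∈ Finset.univ.erase j, m k * ebarN η k j =
      ∑ k ∈ Finset.univ.erase j, n k * ebarN η k j := by
    refine Finset.sum_congr rfl fun k hk => ?_
    have hk := Finset.ne_of_mem_erase hk
    rcases hk.lt_or_gt with hk | hk
    · rw [ebarN_gt η hk, mul_zero, mul_zero]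
    · rw [ih k hk]
  rw [h2, ebarN_self] at h1
  simpa using h1

theorem LT_list {Q : QNA K R N r} (lam2 : Fin N → Fin N → Kˣ)
    (hlam2 : ∀ k l : Fin N, l < k → Q.act (Q.h k) (Q.x l) = ((lam2 k l : Kˣ) : K) • Q.x l)
    {y : Fin N → R} {e : Fin N → Fin N → ℕ} (hy : ∀ k, ∃ d : K, d ≠ 0 ∧ LT Q (y k) (e k) d)
    (m : Fin N → ℕ) (L : List (Fin N)) :
    ∃ d : K, d ≠ 0 ∧ LT Q (L.map fun k => y k ^ m k).prod (L.map fun k => m k • e k).sum d := by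
  have hpow : ∀ k i, ∃ d : K, d ≠ 0 ∧ LT Q (y k ^ i) (i • e k) d := by
    intro k i
    induction i with
    | zero => exact ⟨1, one_ne_zero, by simpa using LT_one Q⟩
    | succ i ih =>
      obtain ⟨d, hd, h⟩ := ih
      obtain ⟨d', hd', h'⟩ := hy k
      refine ⟨_, ?_, by rw [pow_succ, succ_nsmul]; exact LT_mul lam2 hlam2 h h'⟩
      simp [hd, hd']
  induction L with
  | nil => exact ⟨1, one_ne_zero, by simpa using LT_one Q⟩
  | cons k L ih =>
    obtain ⟨d, hd, h⟩ := hpow k (m k)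
    obtain ⟨d', hd', h'⟩ := ih
    refine ⟨_, ?_, by
      rw [List.map_cons, List.prod_cons, List.map_cons, List.sum_cons]
      exact LT_mul lam2 hlam2 h h'⟩
    simp [hd, hd']

theorem main
    (Q : QNA K R N r)
    (lam2 : Fin N → Fin N → Kˣ)
    (hlam2 : ∀ k l : Fin N, l < k → Q.act (Q.h k) (Q.x l) = ((lam2 k l : Kˣ) : K) • Q.x l)
    (η : Fin N → ℤ) (c y : Fin N → R) (hseq : IsPrimeSeq K Q η c y) :
    ∃ (D : Type v) (_ : DivisionRing D) (_ : Algebra K D) (ι : R →ₐ[K] D),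
      IsFractionEmb K ι ∧
      (∀ k l : Fin N,
        ι (y k) * ι (y l) =
          ((Omega K lam2 (ebar η k) (ebar η l) : Kˣ) : K) • (ι (y l) * ι (y k))) ∧
      LinearIndependent K
        (fun f : Fin N → ℤ => ((List.finRange N).map fun k => (ι (y k)) ^ (f k)).prod) := by
  have := isDomain (Q := Q) lam2 hlam2
  obtain ⟨D, iD, iA, ι, hι⟩ := fract_of_QNA Q
  have hcomm : ∀ k l : Fin N, ι (y k) * ι (y l) =
      ((Omega K lam2 (ebar η k) (ebar η l) : Kˣ) : K) • (ι (y l) * ι (y k)) := by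
    intro k l
    rw [← map_mul, comm_y Q lam2 hlam2 η c y hseq k l, map_smul, map_mul]
  refine ⟨D, iD, iA, ι, hι, hcomm, ?_⟩
  have hLT := LT_y Q lam2 hlam2 η c y hseq
  have hy0 : ∀ k, ι (y k) ≠ 0 := by
    intro k
    obtain ⟨d, hd, h⟩ := hLT k
    rw [Ne, map_eq_zero_iff ι hι.1]
    exact LT_ne_zero h hd
  have hq : ∀ k l, QC K (ι (y k)) (ι (y l)) := fun k l => ⟨_, hcomm k l⟩
  rw [linearIndependent_iff']
  intro s g hg
  set M : Fin N → ℤ := fun k => ∑ f ∈ s, |f k| with hM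
  have hpos : ∀ f ∈ s, ∀ k, 0 ≤ M k + f k := by
    intro f hf k
    have h1 : |f k| ≤ M k :=
      Finset.single_le_sum (f := fun f : Fin N → ℤ => |f k|) (fun _ _ => abs_nonneg _) hf
    have h2 := neg_abs_le (f k)
    omega
  choose t ht using fun f : Fin N → ℤ =>
    laurent_mul (K := K) (fun k => ι (y k)) hy0 hq M f (List.finRange N)
  set F : (Fin N → ℤ) → Fin N → ℕ := fun f k => (M k + f k).toNat with hF
  choose d hd hdL using fun f : Fin N → ℤ => LT_list lam2 hlam2 hLT (F f) (List.finRange N)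
  have key : ∑ f ∈ s, (g f * (t f : K)) •
      ((List.finRange N).map fun k => y k ^ F f k).prod = 0 := by
    apply hι.1
    rw [map_zero, map_sum]
    have h1 := congrArg (fun z => ((List.finRange N).map fun k => ι (y k) ^ M k).prod * z) hg
    simp only [mul_zero, Finset.mul_sum] at h1
    rw [← h1]
    refine Finset.sum_congr rfl fun f hf => ?_
    rw [mul_smul_comm, ht f, map_smul, smul_smul, map_list_prod, List.map_map]
    congr 3
    funext k
    simp only [Function.comp, map_pow]
    rw [← zpow_natCast, hF]
    simp only
    rw [Int.toNat_of_nonneg (hpos f hf k)]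
  have hres := lin_indep_of_LT s _ _ d ?_ hd hdL (fun f => g f * (t f : K)) key
  · intro f hf
    simpa using hres f hf
  · intro f hf f' hf' he
    have he' : ((List.finRange N).map fun k => F f k • ebarN η k).sum =
      ((List.finRange N).map fun k => F f' k • ebarN η k).sum := he
    rw [← Fin.sum_univ_def, ← Fin.sum_univ_def] at he'
    have h1 := E_inj η he'
    funext k
    have h2 := congrFun h1 k
    simp only [hF] at h2
    have h3 := hpos f hf k
    have h4 := hpos f' hf' k
    omega

end Final
end QTE

/-- **The embedded quantum torus.**
For a quantum nilpotent algebra `R` of dimension `N` with eigenvalues `λ_{kl}` (given by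
`h_k · x_l = λ_{kl} x_l` for `l < k`), bicharacter `Ω` and vectors `ē_k`, and the
canonical sequence `y_1, …, y_N` of homogeneous prime elements, the assignment
`Y_k^{±1} ↦ y_k^{±1}` defines a `K`-algebra embedding of the quantum torus `T_q`,
`q_{kl} = Ω(ē_k, ē_l)`, into the division ring of fractions `Fract R`:  in `Fract R` the
(invertible) elements `y_k` satisfy the quantum torus commutation relations
`y_k y_l = q_{kl} y_l y_k`, and the Laurent monomials `y_1^{f_1} ⋯ y_N^{f_N}`, `f ∈ ℤ^N`,
are linearly independent over `K`. -/
theorem quantum_torus_embedding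
    {K : Type u} [Field K] {R : Type v} [Ring R] [Algebra K R] {N r : ℕ}
    (Q : QNA K R N r)
    (lam2 : Fin N → Fin N → Kˣ)
    (hlam2 : ∀ k l : Fin N, l < k → Q.act (Q.h k) (Q.x l) = ((lam2 k l : Kˣ) : K) • Q.x l)
    (η : Fin N → ℤ) (c y : Fin N → R) (hseq : IsPrimeSeq K Q η c y) :
    ∃ (D : Type v) (_ : DivisionRing D) (_ : Algebra K D) (ι : R →ₐ[K] D),
      IsFractionEmb K ι ∧
      (∀ k l : Fin N,
        ι (y k) * ι (y l) =
          ((Omega K lam2 (ebar η k) (ebar η l) : Kˣ) : K) • (ι (y l) * ι (y k))) ∧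
      LinearIndependent K
        (fun f : Fin N → ℤ => ((List.finRange N).map fun k => (ι (y k)) ^ (f k)).prod) := by
  exact QTE.main Q lam2 hlam2 η c y hseq
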